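/- In the tower construction with D := ⋃_{n≥1} Dₙ and 𝓜 := ⋃_{n≥2} 𝓜ₙ, for every prime ideal q of D with q ≠ 𝓜, the localization D_q is a valuation domain of Krull dimension ≤ r; more precisely, choosing m ≥ 2 with q_m := q ∩ D_m ≠ 𝓜_m, one has D_q = (D_m)_{q_m}(X′_{m+1}, X′_{m+2}, …), the Nagata ring of (D_m)_{q_m} in the variables X′_{m+1}, X′_{m+2}, …. -/

import Mathlib

/- Preamble: the tower construction of Fontana–Kabbaj (Example 3.1).
All rings are realized as subsets/subrings of one ambient field `Amb k0 r`:
the rational function field over `k0` in the indeterminates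
`X₁, X₂, …` (indexed by `ℕ`), `Y`, and `Z₁, …, Z_{r-1}`. -/

noncomputable section

open Polynomial

/-- Index type for the indeterminates: `Sum.inl n` is `Xₙ`, `Sum.inr (Sum.inl ())` is `Y`,
and `Sum.inr (Sum.inr i)` is `Z_{i+1}`. -/
abbrev TowerVars (r : ℕ) : Type := ℕ ⊕ (Unit ⊕ Fin (r - 1))

/-- The ambient field: the fraction field of the polynomial ring over `k0` in all the
indeterminates. -/
abbrev Amb (k0 : Type) [Field k0] (r : ℕ) : Type :=
  FractionRing (MvPolynomial (TowerVars r) k0)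

variable (k0 : Type) [Field k0] (r : ℕ)

/-- The indeterminate `Xₙ` as an element of the ambient field. -/
def ambX (n : ℕ) : Amb k0 r :=
  algebraMap (MvPolynomial (TowerVars r) k0) (Amb k0 r) (MvPolynomial.X (Sum.inl n))

/-- The indeterminate `Y` as an element of the ambient field. -/
def ambY : Amb k0 r :=
  algebraMap (MvPolynomial (TowerVars r) k0) (Amb k0 r) (MvPolynomial.X (Sum.inr (Sum.inl ())))

/-- The indeterminates `Z₁, …, Z_{r-1}` as elements of the ambient field. -/
def ambZ (i : Fin (r - 1)) : Amb k0 r :=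
  algebraMap (MvPolynomial (TowerVars r) k0) (Amb k0 r) (MvPolynomial.X (Sum.inr (Sum.inr i)))

/-- The image of the base field `k0` in the ambient field. -/
def baseSet : Set (Amb k0 r) :=
  Set.range fun c : k0 => algebraMap (MvPolynomial (TowerVars r) k0) (Amb k0 r) (MvPolynomial.C c)

/-- `kₙ := k0(X₁, …, Xₙ)` as a subfield of the ambient field. -/
def kfld (n : ℕ) : Subfield (Amb k0 r) :=
  Subfield.closure (baseSet k0 r ∪ {x | ∃ i, 1 ≤ i ∧ i ≤ n ∧ x = ambX k0 r i})

/-- `Fₙ := kₙ(Z₁, …, Z_{r-1})`. -/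
def Ffld (n : ℕ) : Subfield (Amb k0 r) :=
  Subfield.closure (↑(kfld k0 r n) ∪ Set.range (ambZ k0 r))

/-- `Kₙ := Fₙ(Y)`. -/
def Kfld (n : ℕ) : Subfield (Amb k0 r) :=
  Subfield.closure (↑(Ffld k0 r n) ∪ {ambY k0 r})

/-- The polynomial ring `Fₙ[Y]` as a subring of the ambient field. -/
def polyRing (n : ℕ) : Subring (Amb k0 r) :=
  Subring.closure (↑(Ffld k0 r n) ∪ {ambY k0 r})

/-- `Vₙ := Fₙ[Y]_{(Y)}`, the localization of `Fₙ[Y]` at the prime `(Y)`, as a subset of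
the ambient field. -/
def Vset (n : ℕ) : Set (Amb k0 r) :=
  {x | ∃ f ∈ polyRing k0 r n, ∃ g ∈ polyRing k0 r n,
    (¬ ∃ h ∈ polyRing k0 r n, g = ambY k0 r * h) ∧ x = f / g}

/-- `Mₙ := Y·Fₙ[Y]_{(Y)}`, the maximal ideal of `Vₙ`. -/
def Mset (n : ℕ) : Set (Amb k0 r) :=
  {x | ∃ v ∈ Vset k0 r n, x = ambY k0 r * v}

/-- `Aₙ := kₙ + Mₙ`. -/
def Aset (n : ℕ) : Set (Amb k0 r) :=
  {x | ∃ c ∈ kfld k0 r n, ∃ m ∈ Mset k0 r n, x = c + m}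

/-- `k := ⋃ₙ kₙ` as a subset of the ambient field. -/
def kfldU : Set (Amb k0 r) := ⋃ n, (kfld k0 r n : Set (Amb k0 r))

/-- `F := k(Z₁, …, Z_{r-1}) = ⋃ₙ Fₙ`. -/
def FfldU : Subfield (Amb k0 r) :=
  Subfield.closure (kfldU k0 r ∪ Set.range (ambZ k0 r))

/-- `K := F(Y) = ⋃ₙ Kₙ`. -/
def KfldU : Subfield (Amb k0 r) :=
  Subfield.closure (↑(FfldU k0 r) ∪ {ambY k0 r})

/-- The polynomial ring `F[Y]`. -/
def polyRingU : Subring (Amb k0 r) :=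
  Subring.closure (↑(FfldU k0 r) ∪ {ambY k0 r})

/-- `V := F[Y]_{(Y)}`. -/
def VsetU : Set (Amb k0 r) :=
  {x | ∃ f ∈ polyRingU k0 r, ∃ g ∈ polyRingU k0 r,
    (¬ ∃ h ∈ polyRingU k0 r, g = ambY k0 r * h) ∧ x = f / g}

/-- `M := Y·F[Y]_{(Y)} = ⋃ₙ Mₙ`. -/
def MsetU : Set (Amb k0 r) :=
  {x | ∃ v ∈ VsetU k0 r, x = ambY k0 r * v}

/-- `A := k + M = ⋃ₙ Aₙ`. -/
def AsetU : Set (Amb k0 r) :=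
  {x | ∃ c ∈ kfldU k0 r, ∃ m ∈ MsetU k0 r, x = c + m}

/-- `X′ₙ := (1 + Y·Xₙ)/Y`. -/
def ambX' (n : ℕ) : Amb k0 r :=
  (1 + ambY k0 r * ambX k0 r n) / ambY k0 r

/-- `1` belongs to the ideal of `W` generated by the coefficients of `g`, where `W` is a
subring (given as a subset `S`) of the ambient field. -/
def unitContent (S : Set (Amb k0 r)) (g : Polynomial (Amb k0 r)) : Prop :=
  ∃ (t : Finset ℕ) (u : ℕ → Amb k0 r), (∀ i ∈ t, u i ∈ S) ∧ ∑ i ∈ t, u i * g.coeff i = 1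

/-- The Nagata ring `W(T)` of a subring `W ⊆ Amb k0 r` (given as a subset `S`) in the
"variable" `T`: all fractions `f(T)/g(T)` with `f, g ∈ W[T]` and the coefficients of `g`
generating the unit ideal of `W`.  (When `T` is transcendental over `W` this is the usual
Nagata ring.) -/
def nagataSet (S : Set (Amb k0 r)) (T : Amb k0 r) : Set (Amb k0 r) :=
  {x | ∃ f g : Polynomial (Amb k0 r), (∀ i, f.coeff i ∈ S) ∧ (∀ i, g.coeff i ∈ S) ∧
    unitContent k0 r S g ∧ x = f.eval T / g.eval T}

/-- The valuation overrings of a ring `D` (given as a subset) inside a subfield `L` of the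
ambient field: subrings `W` with `D ⊆ W ⊆ L` such that for every `x ∈ L`, `x ∈ W` or
`x⁻¹ ∈ W`. -/
def valOverringsIn (D : Set (Amb k0 r)) (L : Subfield (Amb k0 r)) : Set (Subring (Amb k0 r)) :=
  {W | D ⊆ ↑W ∧ (W : Set (Amb k0 r)) ⊆ (L : Set (Amb k0 r)) ∧ ∀ x ∈ L, x ∈ W ∨ x⁻¹ ∈ W}

/-- The Kronecker function ring `Kr_{L(T)}(D, b) = ⋂ {W(T) : W a valuation overring of `D`
in `L`}`, realized as a subset of the ambient field. -/
def krSet (D : Set (Amb k0 r)) (L : Subfield (Amb k0 r)) (T : Amb k0 r) : Set (Amb k0 r) :=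
  ⋂ W ∈ valOverringsIn k0 r D L, nagataSet k0 r (↑W) T

/-- The tower `Dₙ`: `D₁ := A₁` and `Dₙ := Bₙ ∩ Aₙ` for `n ≥ 2`, where
`Bₙ := Kr_{K_{n-1}(X′ₙ)}(D_{n-1}, b)`.  (The value at `0` is junk, set to `D₁`.) -/
def Dset : ℕ → Set (Amb k0 r)
  | 0 => Aset k0 r 1
  | 1 => Aset k0 r 1
  | n + 2 => krSet k0 r (Dset (n + 1)) (Kfld k0 r (n + 1)) (ambX' k0 r (n + 2)) ∩ Aset k0 r (n + 2)

/-- `Bₙ := Kr_{K_{n-1}(X′ₙ)}(D_{n-1}, b)` (meaningful for `n ≥ 2`). -/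
def Bset (n : ℕ) : Set (Amb k0 r) :=
  krSet k0 r (Dset k0 r (n - 1)) (Kfld k0 r (n - 1)) (ambX' k0 r n)

/-- `𝓜ₙ := Mₙ ∩ Dₙ`. -/
def MMset (n : ℕ) : Set (Amb k0 r) := Mset k0 r n ∩ Dset k0 r n

/-- `D := ⋃__{n ≥ 1} Dₙ`. -/
def DsetU : Set (Amb k0 r) := ⋃ n, Dset k0 r n

/-- `𝓜 := ⋃_{n ≥ 2} 𝓜ₙ`. -/
def MMsetU : Set (Amb k0 r) := ⋃ n, MMset k0 r (n + 2)

/-- The localization `D_m = {a/b : a, b ∈ D, b ∉ m}` of a subring `D` of the ambient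
field (given as a subset) at (the complement of) a subset `m`. -/
def locAt (D m : Set (Amb k0 r)) : Set (Amb k0 r) :=
  {x | ∃ a ∈ D, ∃ b ∈ D, b ∉ m ∧ x = a / b}

/-- The quotient field, inside the ambient field, of a subring given as a subset. -/
def qfSet (D : Set (Amb k0 r)) : Set (Amb k0 r) :=
  {x | ∃ a ∈ D, ∃ b ∈ D, b ≠ 0 ∧ x = a / b}

/-- The nonunits of a subring of the ambient field, given as a subset: in a local
subring of a field these form the maximal ideal. -/
def nonunitsIn (S : Set (Amb k0 r)) : Set (Amb k0 r) :=
  {x | x ∈ S ∧ (x = 0 ∨ x⁻¹ ∉ S)}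

/-- A subring `A` of the ambient field is a pseudo-valuation domain: it is local, and its
maximal ideal (= set of nonunits) is also the maximal ideal of some valuation overring of
`A` in its quotient field. -/
def IsPVDSub (A : Subring (Amb k0 r)) : Prop :=
  IsLocalRing ↥A ∧
  ∃ W : Subring (Amb k0 r), (A : Set (Amb k0 r)) ⊆ ↑W ∧
    (W : Set (Amb k0 r)) ⊆ qfSet k0 r ↑A ∧
    (∀ x ∈ qfSet k0 r (A : Set (Amb k0 r)), x ∈ W ∨ x⁻¹ ∈ W) ∧
    nonunitsIn k0 r ↑A = nonunitsIn k0 r ↑W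

/-- The valuative dimension of a subring of the ambient field: the supremum of the Krull
dimensions of its valuation overrings (in its quotient field). -/
def subValuativeDim (A : Subring (Amb k0 r)) : WithBot ℕ∞ :=
  ⨆ W : {W : Subring (Amb k0 r) // (A : Set (Amb k0 r)) ⊆ ↑W ∧
      (W : Set (Amb k0 r)) ⊆ qfSet k0 r ↑A ∧
      ∀ x ∈ qfSet k0 r (A : Set (Amb k0 r)), x ∈ W ∨ x⁻¹ ∈ W},
    ringKrullDim ↥(W : Subring (Amb k0 r))


/-- `1` belongs to the ideal generated by the coefficients of a multivariable polynomial
`g` in the subring given by the subset `S`. -/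
def mvUnitContent (S : Set (Amb k0 r)) (g : MvPolynomial ℕ (Amb k0 r)) : Prop :=
  ∃ (t : Finset (ℕ →₀ ℕ)) (u : (ℕ →₀ ℕ) → Amb k0 r),
    (∀ m ∈ t, u m ∈ S) ∧ ∑ m ∈ t, u m * MvPolynomial.coeff m g = 1

/-- The Nagata ring `W(T₀, T₁, …)` of a subring `W` of the ambient field (given as a
subset `S`) in countably many "variables" `T j`: all fractions `f(T)/g(T)` with
`f, g ∈ W[T₀, T₁, …]` and the coefficients of `g` generating the unit ideal of `W`. -/
def nagataSetMv (S : Set (Amb k0 r)) (T : ℕ → Amb k0 r) : Set (Amb k0 r) :=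
  {x | ∃ f g : MvPolynomial ℕ (Amb k0 r),
    (∀ m, MvPolynomial.coeff m f ∈ S) ∧ (∀ m, MvPolynomial.coeff m g ∈ S) ∧
    mvUnitContent k0 r S g ∧ x = MvPolynomial.eval T f / MvPolynomial.eval T g}

/-- A subring `S` of the ambient field is an *essential* domain: `S` is the intersection
of a family of localizations `S_p` at primes `p ∈ Δ`, each of which is a valuation domain
(with quotient field the quotient field of `S`). -/
def IsEssentialSub (S : Subring (Amb k0 r)) : Prop :=
  ∃ Δ : Set (Ideal ↥S),
    (∀ p ∈ Δ, p.IsPrime) ∧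
    (∀ p ∈ Δ, ∀ x ∈ qfSet k0 r (S : Set (Amb k0 r)),
      x ∈ locAt k0 r ↑S (Subtype.val '' (p : Set ↥S)) ∨
      x⁻¹ ∈ locAt k0 r ↑S (Subtype.val '' (p : Set ↥S))) ∧
    (S : Set (Amb k0 r)) = ⋂ p ∈ Δ, locAt k0 r ↑S (Subtype.val '' (p : Set ↥S))

end


namespace TowerAux
open Polynomial
variable {L : Type*} [Field L]

/-- All coefficients in a set. -/
def PIn (S : Set L) (f : L[X]) : Prop := ∀ i, f.coeff i ∈ S

/-- Valuation subring of a subfield. -/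
structure IsVal (W : Subring L) (K : Subfield L) : Prop where
  le : ∀ x ∈ W, x ∈ K
  tot : ∀ x ∈ K, x ∈ W ∨ x⁻¹ ∈ W

/-- Nonunits of a subring. -/
def NU (W : Subring L) (x : L) : Prop := x ∈ W ∧ (x = 0 ∨ x⁻¹ ∉ W)

/-- Primitive polynomials. -/
def Prim (W : Subring L) (g : L[X]) : Prop :=
  PIn (W : Set L) g ∧ ∃ i, g.coeff i ≠ 0 ∧ (g.coeff i)⁻¹ ∈ W

/-- Elements transcendental over a subfield. -/
def Trans (K : Subfield L) (T : L) : Prop :=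
  ∀ p : L[X], PIn (K : Set L) p → p ≠ 0 → p.eval T ≠ 0

lemma NU.zero (W : Subring L) : NU W 0 := ⟨W.zero_mem, Or.inl rfl⟩

lemma NU.not_one (W : Subring L) : ¬ NU W 1 := by
  rintro ⟨_, h | h⟩
  · exact one_ne_zero h
  · exact h (by simp)

lemma NU.mul {W : Subring L} {x y : L} (hx : x ∈ W) (hy : NU W y) : NU W (x * y) := by
  refine ⟨W.mul_mem hx hy.1, ?_⟩
  by_cases h : x * y = 0
  · exact Or.inl h
  right
  intro h2
  have hx0 : x ≠ 0 := left_ne_zero_of_mul h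
  have hy0 : y ≠ 0 := right_ne_zero_of_mul h
  rcases hy.2 with h3 | h3
  · exact hy0 h3
  · apply h3
    have : y⁻¹ = x * (x * y)⁻¹ := by field_simp
    rw [this]; exact W.mul_mem hx h2

lemma NU.add {W : Subring L} {K : Subfield L} (hW : IsVal W K) {x y : L}
    (hx : NU W x) (hy : NU W y) : NU W (x + y) := by
  by_cases hx0 : x = 0
  · simpa [hx0] using hy
  by_cases hy0 : y = 0
  · simpa [hy0] using hx
  have hK : x / y ∈ K := K.div_mem (hW.le _ hx.1) (hW.le _ hy.1)
  rcases hW.tot _ hK with h | h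
  · have : x + y = (x / y + 1) * y := by field_simp
    rw [this]; exact NU.mul (W.add_mem h W.one_mem) hy
  · have : x + y = (1 + (x / y)⁻¹) * x := by field_simp
    rw [this]; exact NU.mul (W.add_mem W.one_mem h) hx

lemma NU.sum {W : Subring L} {K : Subfield L} (hW : IsVal W K) {ι : Type*} (s : Finset ι)
    (f : ι → L) (h : ∀ i ∈ s, NU W (f i)) : NU W (∑ i ∈ s, f i) := by
  classical
  induction s using Finset.induction_on with
  | empty => simpa using NU.zero W
  | insert a s ha ih =>
    rw [Finset.sum_insert ha]
    exact NU.add hW (h _ (Finset.mem_insert_self _ _))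
      (ih fun i hi => h i (Finset.mem_insert_of_mem hi))

lemma unit_of_not_NU {W : Subring L} {x : L} (hx : x ∈ W) (h : ¬ NU W x) :
    x ≠ 0 ∧ x⁻¹ ∈ W := by
  unfold NU at h
  push Not at h
  exact h hx

lemma not_NU {W : Subring L} {x : L} (h0 : x ≠ 0) (hi : x⁻¹ ∈ W) : ¬ NU W x := by
  rintro ⟨_, h | h⟩
  · exact h0 h
  · exact h hi

lemma PIn.eval {W : Subring L} {f : L[X]} (hf : PIn (W : Set L) f) {T : L} (hT : T ∈ W) :
    f.eval T ∈ W := by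
  rw [eval_eq_sum_range]
  exact W.sum_mem fun i _ => W.mul_mem (hf i) (W.pow_mem hT i)

lemma PIn.mono {S S' : Set L} (h : S ⊆ S') {f : L[X]} (hf : PIn S f) : PIn S' f :=
  fun i => h (hf i)

lemma PIn.add {W : Subring L} {f g : L[X]} (hf : PIn (W : Set L) f) (hg : PIn (W : Set L) g) :
    PIn (W : Set L) (f + g) := fun i => by
  rw [coeff_add]; exact W.add_mem (hf i) (hg i)

lemma PIn.neg {W : Subring L} {f : L[X]} (hf : PIn (W : Set L) f) :
    PIn (W : Set L) (-f) := fun i => by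
  rw [coeff_neg]; exact W.neg_mem (hf i)

lemma PIn.mul {W : Subring L} {f g : L[X]} (hf : PIn (W : Set L) f) (hg : PIn (W : Set L) g) :
    PIn (W : Set L) (f * g) := fun i => by
  rw [coeff_mul]; exact W.sum_mem fun x _ => W.mul_mem (hf _) (hg _)

lemma PIn.C {W : Subring L} {a : L} (ha : a ∈ W) : PIn (W : Set L) (C a) := fun i => by
  rw [coeff_C]; split_ifs
  · exact ha
  · exact W.zero_mem

lemma PIn.X {W : Subring L} : PIn (W : Set L) (X : L[X]) := fun i => by
  rw [coeff_X]; split_ifs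
  · exact W.one_mem
  · exact W.zero_mem

lemma PIn.pow {W : Subring L} {f : L[X]} (hf : PIn (W : Set L) f) (n : ℕ) :
    PIn (W : Set L) (f ^ n) := by
  induction n with
  | zero => rw [pow_zero, ← C_1]; exact PIn.C W.one_mem
  | succ n ih => rw [pow_succ]; exact ih.mul hf

lemma Prim.ne_zero {W : Subring L} {g : L[X]} (hg : Prim W g) : g ≠ 0 := by
  rintro rfl
  obtain ⟨_, i, hi, _⟩ := hg
  simp at hi

lemma Prim.one (W : Subring L) : Prim W (1 : L[X]) := by
  refine ⟨?_, 0, by simp, by simp⟩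
  rw [← C_1]; exact PIn.C W.one_mem

lemma Prim.mul {W : Subring L} {K : Subfield L} (hW : IsVal W K) {f g : L[X]}
    (hf : Prim W f) (hg : Prim W g) : Prim W (f * g) := by
  classical
  refine ⟨hf.1.mul hg.1, ?_⟩
  have ef : ∃ i, ¬ NU W (f.coeff i) := by
    obtain ⟨i, h0, h1⟩ := hf.2; exact ⟨i, not_NU h0 h1⟩
  have eg : ∃ i, ¬ NU W (g.coeff i) := by
    obtain ⟨i, h0, h1⟩ := hg.2; exact ⟨i, not_NU h0 h1⟩
  set a := Nat.find ef with ha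
  set b := Nat.find eg with hb
  have hfa := Nat.find_spec ef
  have hgb := Nat.find_spec eg
  rw [← ha] at hfa
  rw [← hb] at hgb
  refine ⟨a + b, ?_⟩
  apply unit_of_not_NU (hf.1.mul hg.1 _)
  intro hN
  rw [coeff_mul, ← Finset.add_sum_erase _ _ (a := (a, b)) (by simp)] at hN
  have h2 : NU W (∑ x ∈ (Finset.HasAntidiagonal.antidiagonal (a + b)).erase (a, b),
      f.coeff x.1 * g.coeff x.2) := by
    apply NU.sum hW
    rintro ⟨i, j⟩ hij
    simp only [Finset.mem_erase, Finset.HasAntidiagonal.mem_antidiagonal, ne_eq, Prod.mk.injEq] at hij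
    by_cases hia : i < a
    · rw [mul_comm]
      exact NU.mul (hg.1 _) (not_not.1 (Nat.find_min ef hia))
    · have hjb : j < b := by omega
      exact NU.mul (hf.1 _) (not_not.1 (Nat.find_min eg hjb))
  have h3 : NU W (f.coeff a * g.coeff b) := by
    have := NU.add hW hN (NU.mul (W.neg_mem W.one_mem) h2)
    simpa using this
  obtain ⟨f0, f1⟩ := unit_of_not_NU (hf.1 _) hfa
  obtain ⟨g0, g1⟩ := unit_of_not_NU (hg.1 _) hgb
  refine not_NU (mul_ne_zero f0 g0) ?_ h3
  rw [mul_inv]; exact W.mul_mem f1 g1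

/-- dominating coefficient -/
lemma exists_dom {W : Subring L} {K : Subfield L} (hW : IsVal W K) {ι : Type*}
    (s : Finset ι) (c : ι → L) (hc : ∀ i, c i ∈ K) (hs : ∃ i ∈ s, c i ≠ 0) :
    ∃ j ∈ s, c j ≠ 0 ∧ ∀ i ∈ s, c i / c j ∈ W := by
  classical
  induction s using Finset.induction_on with
  | empty => simp at hs
  | insert a s ha ih =>
    by_cases h : ∃ i ∈ s, c i ≠ 0
    · obtain ⟨j, hj, hj0, hj1⟩ := ih h
      rcases hW.tot _ (K.div_mem (hc a) (hc j)) with h2 | h2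
      · refine ⟨j, Finset.mem_insert_of_mem hj, hj0, fun i hi => ?_⟩
        rcases Finset.mem_insert.1 hi with rfl | hi
        · exact h2
        · exact hj1 i hi
      · by_cases ha0 : c a = 0
        · refine ⟨j, Finset.mem_insert_of_mem hj, hj0, fun i hi => ?_⟩
          rcases Finset.mem_insert.1 hi with rfl | hi
          · rw [ha0, zero_div]; exact W.zero_mem
          · exact hj1 i hi
        · refine ⟨a, Finset.mem_insert_self _ _, ha0, fun i hi => ?_⟩
          rcases Finset.mem_insert.1 hi with rfl | hi
          · rw [div_self ha0]; exact W.one_mem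
          · have : c i / c a = c i / c j * (c a / c j)⁻¹ := by field_simp
            rw [this]; exact W.mul_mem (hj1 i hi) h2
    · push Not at h
      obtain ⟨i, hi, hi0⟩ := hs
      rcases Finset.mem_insert.1 hi with rfl | hi
      · refine ⟨i, Finset.mem_insert_self _ _, hi0, fun l hl => ?_⟩
        rcases Finset.mem_insert.1 hl with rfl | hl
        · rw [div_self hi0]; exact W.one_mem
        · rw [h l hl, zero_div]; exact W.zero_mem
      · exact absurd (h i hi) hi0

lemma exists_prim {W : Subring L} {K : Subfield L} (hW : IsVal W K) {g : L[X]}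
    (hg : PIn (K : Set L) g) (h0 : g ≠ 0) :
    ∃ j, g.coeff j ≠ 0 ∧ Prim W (C (g.coeff j)⁻¹ * g) := by
  obtain ⟨i, hi⟩ : ∃ i, g.coeff i ≠ 0 := by
    by_contra h; push Not at h; exact h0 (by ext i; simpa using h i)
  obtain ⟨j, hj, hj0, hj1⟩ := exists_dom hW g.support g.coeff hg ⟨i, by simpa using hi, hi⟩
  refine ⟨j, hj0, fun l => ?_, j, ?_, ?_⟩
  · rw [coeff_C_mul]
    by_cases hl : l ∈ g.support
    · have := hj1 l hl
      rwa [div_eq_inv_mul] at this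
    · rw [notMem_support_iff.1 hl, mul_zero]; exact W.zero_mem
  · rw [coeff_C_mul]; simp [hj0]
  · rw [coeff_C_mul]; simp [hj0]

/-- Nagata ring, generic version -/
def nag (S : Set L) (T : L) : Set L :=
  {x | ∃ f g : L[X], (∀ i, f.coeff i ∈ S) ∧ (∀ i, g.coeff i ∈ S) ∧
    (∃ (t : Finset ℕ) (u : ℕ → L), (∀ i ∈ t, u i ∈ S) ∧ ∑ i ∈ t, u i * g.coeff i = 1) ∧
    x = f.eval T / g.eval T}

lemma mem_nag_iff {W : Subring L} {K : Subfield L} (hW : IsVal W K) {T x : L} :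
    x ∈ nag (W : Set L) T ↔ ∃ f g : L[X], PIn (W : Set L) f ∧ Prim W g ∧
      x = f.eval T / g.eval T := by
  constructor
  · rintro ⟨f, g, hf, hg, ⟨t, u, hu, hs⟩, rfl⟩
    refine ⟨f, g, hf, ⟨hg, ?_⟩, rfl⟩
    by_contra h
    push Not at h
    apply NU.not_one W
    rw [← hs]
    refine NU.sum hW _ _ fun i hi => NU.mul (hu i hi) ⟨hg i, ?_⟩
    by_cases h0 : g.coeff i = 0
    · exact Or.inl h0
    · exact Or.inr (h i h0)
  · rintro ⟨f, g, hf, ⟨hg, i, hi, hi2⟩, rfl⟩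
    exact ⟨f, g, hf, hg, ⟨{i}, fun _ => (g.coeff i)⁻¹, by simpa using hi2, by simp [hi]⟩, rfl⟩

lemma Prim.eval_ne {W : Subring L} {K : Subfield L} (hW : IsVal W K) {T : L} (hT : Trans K T)
    {g : L[X]} (hg : Prim W g) : g.eval T ≠ 0 :=
  hT g (hg.1.mono hW.le) hg.ne_zero

lemma nag_le {W : Subring L} {K K' : Subfield L} (hW : IsVal W K) {T : L} (hK : K ≤ K')
    (hT : T ∈ K') {x : L} (hx : x ∈ nag (W : Set L) T) : x ∈ K' := by
  obtain ⟨f, g, hf, hg, -, rfl⟩ := hx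
  have h1 : (W : Set L) ⊆ (K'.toSubring : Set L) := fun y hy => hK (hW.le y hy)
  exact K'.div_mem (PIn.eval (W := K'.toSubring) (PIn.mono h1 hf) hT)
    (PIn.eval (W := K'.toSubring) (PIn.mono h1 hg) hT)

/-- The Nagata ring of a valuation ring as a subring. -/
def nagRing {W : Subring L} {K : Subfield L} (hW : IsVal W K) {T : L} (hT : Trans K T) :
    Subring L where
  carrier := nag (W : Set L) T
  zero_mem' := (mem_nag_iff hW).2 ⟨0, 1, fun i => by simp, Prim.one W, by simp⟩
  one_mem' := (mem_nag_iff hW).2 ⟨1, 1, (Prim.one W).1, Prim.one W, by simp⟩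
  add_mem' := by
    intro a b ha hb
    obtain ⟨f, g, hf, hg, rfl⟩ := (mem_nag_iff hW).1 ha
    obtain ⟨f', g', hf', hg', rfl⟩ := (mem_nag_iff hW).1 hb
    refine (mem_nag_iff hW).2 ⟨f * g' + g * f', g * g', (hf.mul hg'.1).add (hg.1.mul hf'),
      hg.mul hW hg', ?_⟩
    rw [div_add_div _ _ (hg.eval_ne hW hT) (hg'.eval_ne hW hT)]
    simp
  mul_mem' := by
    intro a b ha hb
    obtain ⟨f, g, hf, hg, rfl⟩ := (mem_nag_iff hW).1 ha
    obtain ⟨f', g', hf', hg', rfl⟩ := (mem_nag_iff hW).1 hb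
    refine (mem_nag_iff hW).2 ⟨f * f', g * g', hf.mul hf', hg.mul hW hg', ?_⟩
    rw [div_mul_div_comm]; simp
  neg_mem' := by
    intro a ha
    obtain ⟨f, g, hf, hg, rfl⟩ := (mem_nag_iff hW).1 ha
    refine (mem_nag_iff hW).2 ⟨-f, g, hf.neg, hg, ?_⟩
    rw [eval_neg, neg_div]

/-- if the content of g bounds that of f then f/g is in the Nagata ring -/
lemma mem_nag_of {W : Subring L} {K : Subfield L} (hW : IsVal W K) {T : L}
    {f g : L[X]} {a : L} (ha : a ≠ 0) (hg : Prim W (C a⁻¹ * g)) (hf : PIn (W : Set L) (C a⁻¹ * f)) :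
    f.eval T / g.eval T ∈ nag (W : Set L) T := by
  refine (mem_nag_iff hW).2 ⟨_, _, hf, hg, ?_⟩
  simp only [eval_mul, eval_C]
  rw [mul_div_mul_left _ _ (inv_ne_zero ha)]

/-- Every element of `K(T)` or its inverse is in the Nagata ring; precise form. -/
lemma frac_form {W : Subring L} {K : Subfield L} (hW : IsVal W K) {T : L}
    {f g : L[X]} (hf : PIn (K : Set L) f) (hg : PIn (K : Set L) g) (hf0 : f ≠ 0) (hg0 : g ≠ 0) :
    ∃ a ∈ K, a ≠ 0 ∧ ∃ f' g' : L[X], Prim W f' ∧ Prim W g' ∧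
      f.eval T / g.eval T = a * (f'.eval T / g'.eval T) := by
  obtain ⟨i, hi, hi'⟩ := exists_prim hW hf hf0
  obtain ⟨j, hj, hj'⟩ := exists_prim hW hg hg0
  refine ⟨f.coeff i / g.coeff j, K.div_mem (hf i) (hg j), div_ne_zero hi hj, _, _, hi', hj', ?_⟩
  simp only [eval_mul, eval_C]
  by_cases h : eval T g = 0
  · simp [h]
  field_simp

end TowerAux


namespace TowerAux
open Polynomial
variable {L : Type*} [Field L]

/-- The Kronecker function ring. -/
def krRing (D : Set L) (K : Subfield L) {T : L} (hT : Trans K T) : Subring L where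
  carrier := {x | ∀ W : Subring L, D ⊆ (W : Set L) → IsVal W K → x ∈ nag (W : Set L) T}
  zero_mem' := fun _ _ hW => (nagRing hW hT).zero_mem
  one_mem' := fun _ _ hW => (nagRing hW hT).one_mem
  add_mem' := fun ha hb W h hW => (nagRing hW hT).add_mem (ha W h hW) (hb W h hW)
  mul_mem' := fun ha hb W h hW => (nagRing hW hT).mul_mem (ha W h hW) (hb W h hW)
  neg_mem' := fun ha W h hW => (nagRing hW hT).neg_mem (ha W h hW)

section kr
variable {D : Set L} {K : Subfield L} {T : L} (hT : Trans K T)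

lemma kr_dom {f g : L[X]} (hg : PIn (K : Set L) g) (h0 : g ≠ 0)
    (h : ∀ i, f.coeff i = 0 ∨ ∃ l, f.coeff i = g.coeff l) :
    f.eval T / g.eval T ∈ krRing D K hT := by
  intro W hD hW
  obtain ⟨j, hj, hj'⟩ := exists_prim hW hg h0
  refine mem_nag_of hW hj hj' fun i => ?_
  rw [coeff_C_mul]
  rcases h i with h | ⟨l, h⟩
  · rw [h, mul_zero]; exact W.zero_mem
  · rw [h, ← coeff_C_mul]; exact hj'.1 l

lemma kr_D {d : L} (hd : d ∈ D) : d ∈ krRing D K hT := by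
  intro W hD hW
  exact (mem_nag_iff hW).2 ⟨C d, 1, PIn.C (hD hd), Prim.one W, by simp⟩

lemma kr_T : T ∈ krRing D K hT := by
  intro W hD hW
  exact (mem_nag_iff hW).2 ⟨X, 1, PIn.X, Prim.one W, by simp⟩

lemma kr_Tinv : T⁻¹ ∈ krRing D K hT := by
  intro W hD hW
  refine (mem_nag_iff hW).2 ⟨1, X, (Prim.one W).1, ⟨PIn.X, 1, by simp, by simp⟩, by simp⟩

lemma kr_coeff {g : L[X]} (hg : PIn (K : Set L) g) (i : ℕ) :
    g.coeff i / g.eval T ∈ krRing D K hT := by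
  by_cases h0 : g = 0
  · subst h0; simp
  have := kr_dom (D := D) hT (f := C (g.coeff i)) hg h0 (fun l => by
    rw [coeff_C]; split_ifs
    · exact Or.inr ⟨_, rfl⟩
    · exact Or.inl rfl)
  simpa using this

lemma Trans.ne_zero (hT : Trans K T) : T ≠ 0 := by
  have := hT X (fun i => by
    rw [coeff_X]; split_ifs
    · exact K.one_mem
    · exact K.zero_mem) X_ne_zero
  simpa using this

/-- The main trick: `u = T^N f + g` divides both `f` and `g`. -/
lemma kr_u {f g : L[X]} (hf : PIn (K : Set L) f) (hg : PIn (K : Set L) g) (h0 : g ≠ 0) {N : ℕ}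
    (hN : g.natDegree < N) :
    T ^ N * f.eval T + g.eval T ≠ 0 ∧
    f.eval T / (T ^ N * f.eval T + g.eval T) ∈ krRing D K hT ∧
    g.eval T / (T ^ N * f.eval T + g.eval T) ∈ krRing D K hT := by
  have e : (X ^ N * f + g).eval T = T ^ N * f.eval T + g.eval T := by simp
  have c1 : ∀ i, (X ^ N * f + g).coeff (i + N) = f.coeff i := fun i => by
    rw [coeff_add, coeff_X_pow_mul, coeff_eq_zero_of_natDegree_lt (p := g) (by omega), add_zero]
  have c2 : ∀ i, i ≤ g.natDegree → (X ^ N * f + g).coeff i = g.coeff i := fun i hi => by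
    rw [coeff_add, coeff_X_pow_mul', if_neg (by omega), zero_add]
  have hu : PIn (K : Set L) (X ^ N * f + g) := by
    have hf' : PIn (K.toSubring : Set L) f := hf
    have hg' : PIn (K.toSubring : Set L) g := hg
    exact ((PIn.X.pow N).mul hf').add hg'
  have hu0 : X ^ N * f + g ≠ 0 := by
    intro h
    have := c2 g.natDegree le_rfl
    rw [h, coeff_zero] at this
    exact h0 (leadingCoeff_eq_zero.1 this.symm)
  rw [← e]
  refine ⟨hT _ hu hu0, kr_dom hT hu hu0 fun i => Or.inr ⟨_, (c1 i).symm⟩,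
    kr_dom hT hu hu0 fun i => ?_⟩
  by_cases hi : i ≤ g.natDegree
  · exact Or.inr ⟨i, (c2 i hi).symm⟩
  · exact Or.inl (coeff_eq_zero_of_natDegree_lt (by omega))

lemma kr_le {K' : Subfield L} (hD : D ⊆ (K : Set L)) (hK : K ≤ K') (hTK : T ∈ K') {x : L}
    (hx : x ∈ krRing D K hT) : x ∈ K' := by
  have h : IsVal K.toSubring K := ⟨fun x hx => hx, fun x hx => Or.inl hx⟩
  exact nag_le h hK hTK (hx K.toSubring hD h)

end kr

/-- One step of the tower. -/
structure Step (D' : Subring L) (K' K : Subfield L) (T : L) (A : Subring L) (M : Set L)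
    (D : Subring L) : Prop where
  hT : Trans K' T
  KK : K' ≤ K
  TK : T ∈ K
  DK : ∀ x ∈ D', x ∈ K'
  fr : ∀ x ∈ K, ∃ f g : L[X], PIn (K' : Set L) f ∧ PIn (K' : Set L) g ∧ g ≠ 0 ∧
    x = f.eval T / g.eval T
  MA : ∀ x ∈ M, x ∈ A
  Madd : ∀ x ∈ M, ∀ y ∈ M, x + y ∈ M
  Mmul : ∀ x ∈ A, ∀ y ∈ M, x * y ∈ M
  Mone : (1 : L) ∉ M
  Ainv : ∀ x ∈ A, x ∉ M → x⁻¹ ∈ A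
  big : ∀ x ∈ K, ∃ k : ℕ, T⁻¹ ^ k * x ∈ M
  sq : ∀ m ∈ M, m * m * T ∈ M
  tM : T⁻¹ ∈ M
  D_iff : ∀ x, x ∈ D ↔ x ∈ A ∧ x ∈ krRing (D' : Set L) K' hT

section step
variable {D' : Subring L} {K' K : Subfield L} {T : L} {A : Subring L} {M : Set L} {D : Subring L}

lemma Step.tD (S : Step D' K' K T A M D) : T⁻¹ ∈ D := (S.D_iff _).2 ⟨S.MA _ S.tM, kr_Tinv _⟩

lemma Step.M0 (S : Step D' K' K T A M D) : (0 : L) ∈ M := by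
  have := S.Mmul 0 A.zero_mem _ S.tM
  simpa using this

lemma Step.tpow (S : Step D' K' K T A M D) (j : ℕ) : T⁻¹ ^ (j + 1) ∈ M := by
  rw [pow_succ]
  exact S.Mmul _ (A.pow_mem (S.MA _ S.tM) _) _ S.tM

lemma Step.Msub (S : Step D' K' K T A M D) {x y : L} (hx : x ∈ M) (hy : y ∈ M) : x - y ∈ M := by
  have := S.Mmul (-1) (A.neg_mem A.one_mem) _ hy
  have := S.Madd _ hx _ this
  rw [sub_eq_add_neg]; simpa using this

lemma Step.DleK (S : Step D' K' K T A M D) {x : L} (hx : x ∈ D) : x ∈ K :=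
  kr_le S.hT S.DK S.KK S.TK ((S.D_iff x).1 hx).2

/-- Elements of `A \ M`, plus a small correction. -/
lemma Step.corr (S : Step D' K' K T A M D) {c : L} (hc : c ∈ A) (hcM : c ∉ M) (hcK : c ∈ K) : ∃ j : ℕ,
    c + T⁻¹ ^ (j + 1) ≠ 0 ∧ (c + T⁻¹ ^ (j + 1))⁻¹ ∈ D ∧ c * (c + T⁻¹ ^ (j + 1))⁻¹ ∈ D := by
  obtain ⟨f, g, hf, hg, hg0, rfl⟩ := S.fr c hcK
  have T0 := S.hT.ne_zero
  have g0 : g.eval T ≠ 0 := S.hT g hg hg0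
  obtain ⟨u0, u1, u2⟩ := kr_u (D := (D' : Set L)) S.hT hf hg hg0 (Nat.lt_succ_self g.natDegree)
  refine ⟨g.natDegree, ?_⟩
  set N := g.natDegree + 1 with hN
  change T ^ N * _ + _ ≠ 0 at u0
  change _ / (T ^ N * _ + _) ∈ _ at u1
  change _ / (T ^ N * _ + _) ∈ _ at u2
  set c := f.eval T / g.eval T with hcdef
  have e : c + T⁻¹ ^ N = (T ^ N * f.eval T + g.eval T) * (T⁻¹ ^ N / g.eval T) := by
    rw [hcdef, inv_pow]; field_simp
  have tN : T⁻¹ ^ N ∈ M := S.tpow _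
  have hA : c + T⁻¹ ^ N ∈ A := A.add_mem hc (S.MA _ tN)
  have hM : c + T⁻¹ ^ N ∉ M := fun h => hcM (by simpa using S.Msub h tN)
  have hne : c + T⁻¹ ^ N ≠ 0 := fun h => hM (h ▸ S.M0)
  have hi := S.Ainv _ hA hM
  refine ⟨hne, (S.D_iff _).2 ⟨hi, ?_⟩, (S.D_iff _).2 ⟨A.mul_mem hc hi, ?_⟩⟩
  · have : (c + T⁻¹ ^ N)⁻¹ = T ^ N * (g.eval T / (T ^ N * f.eval T + g.eval T)) := by
      rw [e, inv_pow]; field_simp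
    rw [this]
    exact Subring.mul_mem _ (Subring.pow_mem _ (kr_T _) _) u2
  · have : c * (c + T⁻¹ ^ N)⁻¹ = T ^ N * (f.eval T / (T ^ N * f.eval T + g.eval T)) := by
      rw [e, hcdef, inv_pow]; field_simp
    rw [this]
    exact Subring.mul_mem _ (Subring.pow_mem _ (kr_T _) _) u1

/-- a prime ideal of `D`, as a set -/
structure PrimeIn (D : Subring L) (Q : Set L) : Prop where
  le : ∀ x ∈ Q, x ∈ D
  zero : (0 : L) ∈ Q
  add : ∀ x ∈ Q, ∀ y ∈ Q, x + y ∈ Q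
  mul : ∀ x ∈ D, ∀ y ∈ Q, x * y ∈ Q
  one : (1 : L) ∉ Q
  prime : ∀ x ∈ D, ∀ y ∈ D, x * y ∈ Q → x ∈ Q ∨ y ∈ Q

lemma PrimeIn.pow {D : Subring L} {Q : Set L} (hQ : PrimeIn D Q) {x : L} (hx : x ∈ D) (n : ℕ)
    (h : x ^ n ∈ Q) : x ∈ Q := by
  induction n with
  | zero => exact absurd (by simpa using h) hQ.one
  | succ n ih =>
    rw [pow_succ] at h
    rcases hQ.prime _ (D.pow_mem hx n) _ hx h with h | h
    · exact ih h
    · exact h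

lemma Step.prime_eq (S : Step D' K' K T A M D) {Q : Set L} (hQ : PrimeIn D Q) (ht : T⁻¹ ∈ Q) : Q = M ∩ (D : Set L) := by
  ext x
  constructor
  · intro hx
    have hxD := hQ.le x hx
    refine ⟨?_, hxD⟩
    by_contra hM
    obtain ⟨j, h0, h1, -⟩ := S.corr ((S.D_iff x).1 hxD).1 hM (S.DleK hxD)
    have h2 : x + T⁻¹ ^ (j + 1) ∈ Q := hQ.add _ hx _ (by
      rw [pow_succ]; exact hQ.mul _ (D.pow_mem S.tD _) _ ht)
    have := hQ.mul _ h1 _ h2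
    rw [inv_mul_cancel₀ h0] at this
    exact hQ.one this
  · rintro ⟨hM, hD⟩
    have T0 := S.hT.ne_zero
    have h1 : x * x * T ∈ D := (S.D_iff _).2 ⟨S.MA _ (S.sq _ hM),
      Subring.mul_mem _ (Subring.mul_mem _ ((S.D_iff x).1 hD).2 ((S.D_iff x).1 hD).2) (kr_T _)⟩
    have h2 := hQ.mul _ h1 _ ht
    rw [mul_assoc, mul_inv_cancel₀ T0, mul_one] at h2
    rcases hQ.prime _ hD _ hD h2 with h | h <;> exact h

lemma Step.big_D (S : Step D' K' K T A M D) {x : L} (hx : x ∈ krRing (D' : Set L) K' S.hT) :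
    ∃ k : ℕ, T⁻¹ ^ k * x ∈ D := by
  obtain ⟨k, hk⟩ := S.big x (kr_le S.hT S.DK S.KK S.TK hx)
  exact ⟨k, (S.D_iff _).2 ⟨S.MA _ hk, Subring.mul_mem _ (Subring.pow_mem _ (kr_Tinv _) _) hx⟩⟩

/-- generic localization -/
def loc (D Q : Set L) : Set L := {x | ∃ a ∈ D, ∃ b ∈ D, b ∉ Q ∧ x = a / b}

lemma PrimeIn.ne {D : Subring L} {Q : Set L} (hQ : PrimeIn D Q) {b : L} (hb : b ∉ Q) : b ≠ 0 :=
  fun h => hb (h ▸ hQ.zero)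

/-- localization as a subring -/
def locRing {D : Subring L} {Q : Set L} (hQ : PrimeIn D Q) : Subring L where
  carrier := loc (D : Set L) Q
  zero_mem' := ⟨0, D.zero_mem, 1, D.one_mem, hQ.one, by simp⟩
  one_mem' := ⟨1, D.one_mem, 1, D.one_mem, hQ.one, by simp⟩
  add_mem' := by
    rintro _ _ ⟨a, ha, b, hb, hbQ, rfl⟩ ⟨a', ha', b', hb', hbQ', rfl⟩
    refine ⟨a * b' + b * a', D.add_mem (D.mul_mem ha hb') (D.mul_mem hb ha'), b * b',
      D.mul_mem hb hb', fun h => ?_, div_add_div _ _ (hQ.ne hbQ) (hQ.ne hbQ')⟩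
    rcases hQ.prime _ hb _ hb' h with h | h
    · exact hbQ h
    · exact hbQ' h
  mul_mem' := by
    rintro _ _ ⟨a, ha, b, hb, hbQ, rfl⟩ ⟨a', ha', b', hb', hbQ', rfl⟩
    refine ⟨a * a', D.mul_mem ha ha', b * b',
      D.mul_mem hb hb', fun h => ?_, div_mul_div_comm _ _ _ _⟩
    rcases hQ.prime _ hb _ hb' h with h | h
    · exact hbQ h
    · exact hbQ' h
  neg_mem' := by
    rintro _ ⟨a, ha, b, hb, hbQ, rfl⟩
    exact ⟨-a, D.neg_mem ha, b, hb, hbQ, (neg_div _ _).symm⟩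

lemma le_locRing {D : Subring L} {Q : Set L} (hQ : PrimeIn D Q) : D ≤ locRing hQ :=
  fun x hx => ⟨x, hx, 1, D.one_mem, hQ.one, by simp⟩

lemma Step.isVal_loc (S : Step D' K' K T A M D) {Q : Set L} (hQ : PrimeIn D Q) (ht : T⁻¹ ∉ Q) : IsVal (locRing hQ) K := by
  have T0 := S.hT.ne_zero
  constructor
  · rintro _ ⟨a, ha, b, hb, -, rfl⟩
    exact K.div_mem (S.DleK ha) (S.DleK hb)
  · intro x hx
    obtain ⟨f, g, hf, hg, hg0, rfl⟩ := S.fr x hx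
    have g0 : g.eval T ≠ 0 := S.hT g hg hg0
    obtain ⟨u0, u1, u2⟩ := kr_u (D := (D' : Set L)) S.hT hf hg hg0 (Nat.lt_succ_self g.natDegree)
    set N := g.natDegree.succ
    set u := T ^ N * f.eval T + g.eval T with hu
    obtain ⟨k, hk⟩ := S.big_D u1
    obtain ⟨l, hl⟩ := S.big_D u2
    have h1 : T⁻¹ ^ (k + l) * (f.eval T / u) ∈ D := by
      rw [add_comm, pow_add, mul_assoc]; exact D.mul_mem (D.pow_mem S.tD _) hk
    have h2 : T⁻¹ ^ (k + l) * (g.eval T / u) ∈ D := by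
      rw [pow_add, mul_assoc]; exact D.mul_mem (D.pow_mem S.tD _) hl
    by_cases hgQ : T⁻¹ ^ (k + l) * (g.eval T / u) ∈ Q
    · by_cases hfQ : T⁻¹ ^ (k + l) * (f.eval T / u) ∈ Q
      · exfalso
        have h3 := hQ.add _ hfQ _ (hQ.mul _ (D.pow_mem S.tD N) _ hgQ)
        have e : T⁻¹ ^ (k + l) * (f.eval T / u) + T⁻¹ ^ N * (T⁻¹ ^ (k + l) * (g.eval T / u)) =
            T⁻¹ ^ (k + l + N) := by
          have e2 : f.eval T / u + T⁻¹ ^ N * (g.eval T / u) = T⁻¹ ^ N * (u / u) := by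
            conv_rhs => rw [show u / u = (T ^ N * f.eval T + g.eval T) / u by rw [← hu]]
            rw [inv_pow]; field_simp
          rw [div_self u0, mul_one] at e2
          rw [pow_add _ (k + l) N]; linear_combination (T⁻¹ ^ (k + l)) * e2
        rw [e] at h3
        exact ht (hQ.pow S.tD _ h3)
      · right
        refine ⟨_, h2, _, h1, hfQ, ?_⟩
        rw [mul_div_mul_left _ _ (pow_ne_zero _ (inv_ne_zero T0)), div_div_div_cancel_right₀ u0,
          inv_div]
    · left
      refine ⟨_, h1, _, h2, hgQ, ?_⟩
      rw [mul_div_mul_left _ _ (pow_ne_zero _ (inv_ne_zero T0)), div_div_div_cancel_right₀ u0]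

/-- Characterization of valuation rings over the Kronecker function ring. -/
lemma Step.nag_eq (S : Step D' K' K T A M D) {W W' : Subring L} (hW : IsVal W K') (hW' : IsVal W' K) (hle : W ≤ W')
    (hdom : ∀ a ∈ W, a⁻¹ ∈ W' → a⁻¹ ∈ W)
    (hB : ∀ x ∈ krRing (D' : Set L) K' S.hT, x ∈ W') :
    (∀ g, Prim W g → (g.eval T) ∈ W' ∧ (g.eval T)⁻¹ ∈ W') ∧ (W' : Set L) = nag (W : Set L) T := by
  have hTW := hB _ (kr_T S.hT)
  have key : ∀ g, Prim W g → (g.eval T) ∈ W' ∧ (g.eval T)⁻¹ ∈ W' := by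
    intro g hg
    refine ⟨PIn.eval (hg.1.mono hle) hTW, ?_⟩
    obtain ⟨i, hi, hi'⟩ := hg.2
    have h1 := hB _ (kr_coeff S.hT (hg.1.mono hW.le) i)
    have := W'.mul_mem (hle hi') h1
    rwa [← mul_div_assoc, inv_mul_cancel₀ hi, one_div] at this
  refine ⟨key, ?_⟩
  ext x
  constructor
  · intro hx
    change x ∈ W' at hx
    obtain ⟨f, g, hf, hg, hg0, rfl⟩ := S.fr x (hW'.le x hx)
    by_cases hf0 : f = 0
    · subst hf0
      rw [eval_zero, zero_div]
      exact (nagRing hW S.hT).zero_mem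
    obtain ⟨a, ha, ha0, f', g', hf', hg', e⟩ := frac_form (T := T) hW hf hg hf0 hg0
    rw [e] at hx ⊢
    have haW : a ∈ W := by
      have h1 := W'.mul_mem hx (W'.mul_mem (key _ hf').2 (key _ hg').1)
      have e1 := hf'.eval_ne hW S.hT
      have e2 := hg'.eval_ne hW S.hT
      have e3 : a * (f'.eval T / g'.eval T) * ((f'.eval T)⁻¹ * g'.eval T) = a := by field_simp
      rw [e3] at h1
      rcases hW.tot a ha with h | h
      · exact h
      · have := hdom _ h (by rwa [inv_inv])
        rwa [inv_inv] at this
    refine (mem_nag_iff hW).2 ⟨C a * f', g', (PIn.C haW).mul hf'.1, hg', ?_⟩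
    simp [mul_div_assoc]
  · intro hx
    obtain ⟨f, g, hf, hg, rfl⟩ := (mem_nag_iff hW).1 hx
    rw [div_eq_mul_inv]
    exact W'.mul_mem (PIn.eval (hf.mono hle) hTW) (key g hg).2

lemma Step.kr_le_of_T (S : Step D' K' K T A M D) {W' : Subring L} (hD : D ≤ W') (hT : T ∈ W') :
    ∀ x ∈ krRing (D' : Set L) K' S.hT, x ∈ W' := by
  intro x hx
  obtain ⟨k, hk⟩ := S.big_D hx
  have := W'.mul_mem (W'.pow_mem hT k) (hD hk)
  rwa [← mul_assoc, ← mul_pow, mul_inv_cancel₀ S.hT.ne_zero, one_pow, one_mul] at this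

/-- the localization step -/
lemma Step.loc_step (S : Step D' K' K T A M D) {Q Q' : Set L} (hQ : PrimeIn D Q) (hQ' : PrimeIn D' Q') (hDD : D' ≤ D)
    (hQQ : ∀ x ∈ D', (x ∈ Q' ↔ x ∈ Q)) (hV : IsVal (locRing hQ') K') (ht : T⁻¹ ∉ Q) :
    locRing hQ' ≤ locRing hQ ∧ (∀ a ∈ locRing hQ', a⁻¹ ∈ locRing hQ → a⁻¹ ∈ locRing hQ') ∧
    (∀ g, Prim (locRing hQ') g → (g.eval T) ∈ locRing hQ ∧ (g.eval T)⁻¹ ∈ locRing hQ) ∧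
    (locRing hQ : Set L) = nag (locRing hQ' : Set L) T := by
  have hle : locRing hQ' ≤ locRing hQ := by
    rintro _ ⟨a, ha, b, hb, hbQ, rfl⟩
    exact ⟨a, hDD ha, b, hDD hb, fun h => hbQ ((hQQ b hb).2 h), rfl⟩
  have hdom : ∀ a ∈ locRing hQ', a⁻¹ ∈ locRing hQ → a⁻¹ ∈ locRing hQ' := by
    rintro _ ⟨a, ha, b, hb, hbQ, rfl⟩ ⟨c, hc, d, hd, hdQ, h⟩
    by_cases ha0 : a = 0
    · subst ha0
      simp
    refine ⟨b, hb, a, ha, fun haQ => ?_, by rw [inv_div]⟩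
    have ha' := (hQQ a ha).1 haQ
    have d0 := hQ.ne hdQ
    rw [inv_div, div_eq_div_iff ha0 d0] at h
    have h2 : b * d ∈ Q := by rw [h]; exact hQ.mul _ hc _ ha'
    rcases hQ.prime _ (hDD hb) _ hd h2 with h | h
    · exact hbQ ((hQQ b hb).2 h)
    · exact hdQ h
  have hTW : T ∈ locRing hQ := ⟨1, D.one_mem, T⁻¹, S.tD, ht, by simp⟩
  exact ⟨hle, hdom, S.nag_eq hV (S.isVal_loc hQ ht) hle hdom
    (S.kr_le_of_T (le_locRing hQ) hTW)⟩

end step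
end TowerAux


namespace TowerAux
open Polynomial
variable {L : Type*} [Field L]

/-- Elements realizing a chain of primes. -/
def Chain (O : Subring L) {d : ℕ} (x : Fin d → L) : Prop :=
  ∀ i, x i ≠ 0 ∧ ∀ e : Fin d → ℕ, (∏ j ∈ Finset.Ioi i, x j ^ e j) / x i ∉ O

lemma Step.descend {D' : Subring L} {K' K : Subfield L} {T : L} {A : Subring L} {M : Set L}
    {D : Subring L} (S : Step D' K' K T A M D) {W' : Subring L}
    (hW' : IsVal W' K) (hD : D ≤ W') (hT : T ∈ W') {d : ℕ} {x : Fin d → L}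
    (hx : ∀ i, x i ∈ K) (hc : Chain W' x) :
    IsVal (W' ⊓ K'.toSubring) K' ∧
    ∃ y : Fin d → L, (∀ i, y i ∈ K') ∧ Chain (W' ⊓ K'.toSubring) y := by
  have hW : IsVal (W' ⊓ K'.toSubring) K' := by
    refine ⟨fun x hx => hx.2, fun x hx => ?_⟩
    rcases hW'.tot x (S.KK hx) with h | h
    · exact Or.inl ⟨h, hx⟩
    · exact Or.inr ⟨h, K'.inv_mem hx⟩
  refine ⟨hW, ?_⟩
  obtain ⟨key, -⟩ := S.nag_eq hW hW' inf_le_left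
    (fun a ha h => ⟨h, K'.inv_mem (hW.le a ha)⟩) (S.kr_le_of_T hD hT)
  have h1 : ∀ i, ∃ a u, a ∈ K' ∧ a ≠ 0 ∧ u ≠ 0 ∧ u ∈ W' ∧ u⁻¹ ∈ W' ∧ x i = a * u := by
    intro i
    obtain ⟨f, g, hf, hg, hg0, e⟩ := S.fr (x i) (hx i)
    have hf0 : f ≠ 0 := by
      rintro rfl
      rw [eval_zero, zero_div] at e
      exact (hc i).1 e
    obtain ⟨a, ha, ha0, f', g', hf', hg', e2⟩ := frac_form (T := T) hW hf hg hf0 hg0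
    refine ⟨a, _, ha, ha0, div_ne_zero (hf'.eval_ne hW S.hT) (hg'.eval_ne hW S.hT), ?_, ?_,
      e.trans e2⟩
    · rw [div_eq_mul_inv]; exact W'.mul_mem (key _ hf').1 (key _ hg').2
    · rw [inv_div, div_eq_mul_inv]; exact W'.mul_mem (key _ hg').1 (key _ hf').2
  choose a u ha ha0 hu0 hu hu' hxu using h1
  refine ⟨a, ha, fun i => ⟨ha0 i, fun e h => (hc i).2 e ?_⟩⟩
  have h2 : (∏ j ∈ Finset.Ioi i, x j ^ e j) / x i =
      (∏ j ∈ Finset.Ioi i, a j ^ e j) / a i * ((∏ j ∈ Finset.Ioi i, u j ^ e j) * (u i)⁻¹) := by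
    have : ∀ j, x j ^ e j = a j ^ e j * u j ^ e j := fun j => by rw [hxu j, mul_pow]
    simp only [this, Finset.prod_mul_distrib, hxu i]
    have := ha0 i
    have := hu0 i
    field_simp
  rw [h2]
  exact W'.mul_mem h.1 (W'.mul_mem (W'.prod_mem fun j _ => W'.pow_mem (hu j) _) (hu' i))

/-- units of `A` belong to valuation rings in which `T⁻¹` is a nonunit. -/
lemma Step.units_mem {D' : Subring L} {K' K : Subfield L} {T : L} {A : Subring L} {M : Set L}
    {D : Subring L} (S : Step D' K' K T A M D) {W' : Subring L}
    (hW' : IsVal W' K) (hD : D ≤ W') (hT : T ∉ W') {c : L} (hc : c ∈ A) (hcM : c ∉ M)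
    (hcK : c ∈ K) : c ∈ W' := by
  have htW : T⁻¹ ∈ W' := hD S.tD
  have htN : ∀ j : ℕ, NU W' (T⁻¹ ^ (j + 1)) := fun j => by
    rw [pow_succ]
    exact NU.mul (W'.pow_mem htW j) ⟨htW, Or.inr (by rwa [inv_inv])⟩
  have h1 : ∀ b ∈ D, b ∉ M → ¬ NU W' b := by
    intro b hb hbM hN
    obtain ⟨j, h0, h2, -⟩ := S.corr ((S.D_iff b).1 hb).1 hbM (S.DleK hb)
    exact not_NU h0 (hD h2) (NU.add hW' hN (htN j))
  obtain ⟨j, h0, h2, h3⟩ := S.corr hc hcM hcK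
  have h4 : (c + T⁻¹ ^ (j + 1))⁻¹ ∉ M := by
    intro h
    apply S.Mone
    have := S.Mmul (c + T⁻¹ ^ (j + 1)) (A.add_mem hc (S.MA _ (S.tpow j))) _ h
    rwa [mul_inv_cancel₀ h0] at this
  obtain ⟨h5, h6⟩ := unit_of_not_NU (hD h2) (h1 _ h2 h4)
  have := W'.mul_mem (hD h3) h6
  rwa [inv_inv, mul_assoc, inv_mul_cancel₀ h0, mul_one] at this

lemma Chain.mem {O : Subring L} {K : Subfield L} (hO : IsVal O K) {d : ℕ} {x : Fin d → L}
    (hx : ∀ i, x i ∈ K) (hc : Chain O x) (i : Fin d) : x i ∈ O := by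
  rcases hO.tot _ (hx i) with h | h
  · exact h
  · exact absurd (by simpa using h) ((hc i).2 fun _ => 0)

lemma Chain.mono_aux {O : Subring L} {K : Subfield L} (hO : IsVal O K) {d : ℕ} {x : Fin d → L}
    (hx : ∀ i, x i ∈ K) (hc : Chain O x) (α β : Fin d → ℕ) (i : Fin d)
    (hi : ∀ j < i, α j = β j) (hlt : β i < α i)
    (h : (∏ j, x j ^ β j) / (∏ j, x j ^ α j) ∈ O) : False := by
  have hsplit : ∀ γ : Fin d → ℕ, ∏ j, x j ^ γ j =
      (∏ j ∈ Finset.Iio i, x j ^ γ j) * x i ^ γ i * ∏ j ∈ Finset.Ioi i, x j ^ γ j := by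
    intro γ
    rw [← Finset.prod_compl_mul_prod (Finset.Ioi i)]
    congr 1
    have : (Finset.Ioi i)ᶜ = insert i (Finset.Iio i) := by
      ext j; simp [le_iff_eq_or_lt]
    rw [this, Finset.prod_insert (by simp), mul_comm]
  have hne : ∀ (s : Finset (Fin d)) (γ : Fin d → ℕ), ∏ j ∈ s, x j ^ γ j ≠ 0 := fun s γ =>
    Finset.prod_ne_zero_iff.2 fun j _ => pow_ne_zero _ (hc j).1
  refine (hc i).2 β ?_
  obtain ⟨c, hc'⟩ : ∃ c, α i = β i + c + 1 := ⟨α i - β i - 1, by omega⟩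
  have hxi := (hc i).1
  have e : (∏ j ∈ Finset.Ioi i, x j ^ β j) / x i =
      (∏ j, x j ^ β j) / (∏ j, x j ^ α j) * (x i ^ c * ∏ j ∈ Finset.Ioi i, x j ^ α j) := by
    have hpre : ∏ j ∈ Finset.Iio i, x j ^ α j = ∏ j ∈ Finset.Iio i, x j ^ β j :=
      Finset.prod_congr rfl (fun j hj => by rw [hi j (Finset.mem_Iio.1 hj)])
    rw [hsplit α, hsplit β, hc', hpre]
    have := hne (Finset.Iio i) β
    have := hne (Finset.Ioi i) α
    field_simp
    ring
  rw [e]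
  exact O.mul_mem h (O.mul_mem (O.pow_mem (Chain.mem hO hx hc i) _)
    (O.prod_mem fun j _ => O.pow_mem (Chain.mem hO hx hc j) _))

lemma Chain.mono_inj {O : Subring L} {K : Subfield L} (hO : IsVal O K) {d : ℕ} {x : Fin d → L}
    (hx : ∀ i, x i ∈ K) (hc : Chain O x) (α β : Fin d → ℕ)
    (h1 : (∏ j, x j ^ β j) / (∏ j, x j ^ α j) ∈ O)
    (h2 : (∏ j, x j ^ α j) / (∏ j, x j ^ β j) ∈ O) : α = β := by
  classical
  by_contra hne
  have hs : (Finset.univ.filter fun j => α j ≠ β j).Nonempty := by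
    obtain ⟨j, hj⟩ := Function.ne_iff.1 hne
    exact ⟨j, by simpa using hj⟩
  have hm := Finset.min'_mem _ hs
  set i := Finset.min' _ hs with hi
  have hlt : ∀ j < i, α j = β j := by
    intro j hj
    by_contra hj'
    exact absurd (Finset.min'_le (Finset.univ.filter fun j => α j ≠ β j) j (by simpa using hj'))
      (not_le.2 hj)
  have hi' : α i ≠ β i := by simpa using hm
  rcases lt_or_gt_of_ne hi' with h | h
  · exact Chain.mono_aux hO hx hc β α i (fun j hj => (hlt j hj).symm) h h2
  · exact Chain.mono_aux hO hx hc α β i hlt h h1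

lemma Chain.algInd {O : Subring L} {K k : Subfield L} (hO : IsVal O K) (hk : ∀ c ∈ k, c ∈ O)
    {d : ℕ} {x : Fin d → L} (hx : ∀ i, x i ∈ K) (hc : Chain O x) : AlgebraicIndependent k x := by
  classical
  rw [algebraicIndependent_iff]
  intro p hp
  by_contra hp0
  set c : (Fin d →₀ ℕ) → L := fun α => ((p.coeff α : k) : L) * ∏ j, x j ^ α j with hcdef
  have hsum : ∑ α ∈ p.support, c α = 0 := by
    rw [← hp, MvPolynomial.aeval_def, MvPolynomial.eval₂_eq']
    rfl
  have hne : ∀ γ : Fin d →₀ ℕ, ∏ j, x j ^ γ j ≠ 0 := fun γ =>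
    Finset.prod_ne_zero_iff.2 fun j _ => pow_ne_zero _ (hc j).1
  have hcoef : ∀ α ∈ p.support, ((p.coeff α : k) : L) ≠ 0 := fun α hα h => by
    rw [MvPolynomial.mem_support_iff] at hα
    exact hα (Subtype.ext h)
  have hcK : ∀ α, c α ∈ K := fun α => K.mul_mem (hO.le _ (hk _ (p.coeff α).2))
    (K.prod_mem fun j _ => K.pow_mem (hx j) _)
  obtain ⟨α, hα⟩ := MvPolynomial.ne_zero_iff.1 hp0
  have hα' : α ∈ p.support := MvPolynomial.mem_support_iff.2 hα
  obtain ⟨β, hβ, hβ0, hβ1⟩ := exists_dom hO p.support c hcK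
    ⟨α, hα', mul_ne_zero (hcoef α hα') (hne α)⟩
  have hNU : ∀ γ ∈ p.support.erase β, NU O (c γ / c β) := by
    intro γ hγ
    obtain ⟨hγβ, hγs⟩ := Finset.mem_erase.1 hγ
    refine ⟨hβ1 γ hγs, Or.inr fun h => hγβ ?_⟩
    have q1 := hcoef γ hγs
    have q2 := hcoef β hβ
    have q3 := hne γ
    have q4 := hne β
    apply DFunLike.coe_injective
    refine Chain.mono_inj hO hx hc γ β ?_ ?_
    · have := O.mul_mem (hk _ (k.div_mem (p.coeff γ).2 (p.coeff β).2)) h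
      have e : ((p.coeff γ : k) : L) / ((p.coeff β : k) : L) * (c γ / c β)⁻¹ =
        (∏ j, x j ^ β j) / (∏ j, x j ^ γ j) := by simp only [hcdef]; field_simp
      rwa [e] at this
    · have := O.mul_mem (hk _ (k.div_mem (p.coeff β).2 (p.coeff γ).2)) (hβ1 γ hγs)
      have e : ((p.coeff β : k) : L) / ((p.coeff γ : k) : L) * (c γ / c β) =
        (∏ j, x j ^ γ j) / (∏ j, x j ^ β j) := by simp only [hcdef]; field_simp
      rwa [e] at this
  have h1 := NU.sum hO _ _ hNU
  have h2 : ∑ γ ∈ p.support.erase β, c γ / c β = -1 := by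
    rw [← Finset.sum_div, div_eq_iff hβ0]
    rw [← Finset.add_sum_erase _ _ hβ] at hsum
    linear_combination hsum
  rw [h2] at h1
  exact NU.not_one O (by simpa using NU.mul (O.neg_mem O.one_mem) h1)

lemma dim_bound {K k : Subfield L} (s : Set L)
    (hK : ∀ E : Subfield L, k ≤ E → s ⊆ E → K ≤ E)
    {d : ℕ} {x : Fin d → L} (hx : ∀ i, x i ∈ K) (hi : AlgebraicIndependent k x) :
    (d : ℕ∞) ≤ s.encard := by
  have hind : (AlgebraicIndependent.matroid k L).Indep (Set.range x) :=
    AlgebraicIndependent.matroid_indep_iff.2 (AlgebraicIndependent.coe_range hi)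
  have hle : Set.range x ⊆ (AlgebraicIndependent.matroid k L).closure s := by
    rw [AlgebraicIndependent.matroid_closure_eq]
    rintro _ ⟨i, rfl⟩
    have h1 : K ≤ (_root_.algebraicClosure (IntermediateField.adjoin k s) L).toSubfield := by
      apply hK
      · intro c hc
        exact (_root_.algebraicClosure (IntermediateField.adjoin k s) L).algebraMap_mem
          ⟨c, (IntermediateField.adjoin k s).algebraMap_mem ⟨c, hc⟩⟩
      · intro c hc
        exact (_root_.algebraicClosure (IntermediateField.adjoin k s) L).algebraMap_mem
          ⟨c, IntermediateField.subset_adjoin k s hc⟩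
    have h2 : IsAlgebraic (IntermediateField.adjoin k s) (x i) :=
      mem_algebraicClosure_iff.1 (h1 (hx i))
    rw [IntermediateField.isAlgebraic_adjoin_iff] at h2
    exact h2
  have e1 := hind.eRk_eq_encard
  have e2 := (AlgebraicIndependent.matroid k L).eRk_mono hle
  rw [Matroid.eRk_closure_eq, e1] at e2
  have e3 := (AlgebraicIndependent.matroid k L).eRk_le_encard s
  have e4 : (Set.range x).encard = d := by
    rw [← Set.image_univ, hi.injective.encard_image]; simp
  rw [← e4]; exact e2.trans e3

end TowerAux


namespace TowerAux
open Polynomial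
variable {L : Type*} [Field L]

/-- The field `K(T)`. -/
def fracFld {K : Subfield L} {T : L} (hT : Trans K T) : Subfield L where
  carrier := {x | ∃ f g : L[X], PIn (K.toSubring : Set L) f ∧ PIn (K.toSubring : Set L) g ∧
    g ≠ 0 ∧ x = f.eval T / g.eval T}
  zero_mem' := ⟨0, 1, fun i => by rw [coeff_zero]; exact K.zero_mem, (Prim.one _).1, one_ne_zero, by simp⟩
  one_mem' := ⟨1, 1, (Prim.one _).1, (Prim.one _).1, one_ne_zero, by simp⟩
  add_mem' := by
    rintro _ _ ⟨f, g, hf, hg, h0, rfl⟩ ⟨f', g', hf', hg', h0', rfl⟩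
    refine ⟨f * g' + g * f', g * g', (hf.mul hg').add (hg.mul hf'), hg.mul hg',
      mul_ne_zero h0 h0', ?_⟩
    rw [div_add_div _ _ (hT g hg h0) (hT g' hg' h0')]
    simp
  mul_mem' := by
    rintro _ _ ⟨f, g, hf, hg, h0, rfl⟩ ⟨f', g', hf', hg', h0', rfl⟩
    refine ⟨f * f', g * g', hf.mul hf', hg.mul hg', mul_ne_zero h0 h0', ?_⟩
    rw [div_mul_div_comm]; simp
  neg_mem' := by
    rintro _ ⟨f, g, hf, hg, h0, rfl⟩
    exact ⟨-f, g, hf.neg, hg, h0, by rw [eval_neg, neg_div]⟩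
  inv_mem' := by
    rintro _ ⟨f, g, hf, hg, h0, rfl⟩
    by_cases hf0 : f = 0
    · subst hf0
      exact ⟨0, 1, fun i => by rw [coeff_zero]; exact K.zero_mem, (Prim.one _).1, one_ne_zero, by simp⟩
    · exact ⟨g, f, hg, hf, hf0, by rw [inv_div]⟩

lemma fracFld_base {K : Subfield L} {T : L} (hT : Trans K T) : K ≤ fracFld hT :=
  fun c hc => ⟨C c, 1, PIn.C (W := K.toSubring) hc, (Prim.one _).1, one_ne_zero, by simp⟩

lemma fracFld_T {K : Subfield L} {T : L} (hT : Trans K T) : T ∈ fracFld hT :=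
  ⟨X, 1, PIn.X, (Prim.one _).1, one_ne_zero, by simp⟩

/-- polynomial data -/
structure PolyD (k F : Subfield L) (P : Subring L) (Y : L) : Prop where
  kF : k ≤ F
  FP : ∀ c ∈ F, c ∈ P
  YP : Y ∈ P
  hY : ∀ p ∈ P, Y * p ≠ 1
  fac : ∀ g ∈ P, g ≠ 0 → ∃ (j : ℕ) (c h : L), c ∈ F ∧ c ≠ 0 ∧ h ∈ P ∧ g = Y ^ j * (c + Y * h)

lemma closure_poly (F : Subfield L) (Y : L) {x : L}
    (hx : x ∈ Subring.closure ((F : Set L) ∪ {Y})) :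
    ∃ f : L[X], PIn (F.toSubring : Set L) f ∧ x = f.eval Y := by
  induction hx using Subring.closure_induction with
  | mem x hx =>
    rcases hx with hx | rfl
    · exact ⟨C x, PIn.C (W := F.toSubring) hx, by simp⟩
    · exact ⟨X, PIn.X, by simp⟩
  | zero => exact ⟨0, fun i => by rw [coeff_zero]; exact F.zero_mem, by simp⟩
  | one => exact ⟨1, (Prim.one _).1, by simp⟩
  | add x y _ _ hx hy =>
    obtain ⟨f, hf, rfl⟩ := hx
    obtain ⟨g, hg, rfl⟩ := hy
    exact ⟨f + g, hf.add hg, by simp⟩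
  | neg x _ hx =>
    obtain ⟨f, hf, rfl⟩ := hx
    exact ⟨-f, hf.neg, by simp⟩
  | mul x y _ _ hx hy =>
    obtain ⟨f, hf, rfl⟩ := hx
    obtain ⟨g, hg, rfl⟩ := hy
    exact ⟨f * g, hf.mul hg, by simp⟩

lemma polyD_of_trans {k F : Subfield L} {Y : L} (hk : k ≤ F) (hT : Trans F Y) :
    PolyD k F (Subring.closure ((F : Set L) ∪ {Y})) Y := by
  have hFP : ∀ c ∈ F, c ∈ Subring.closure ((F : Set L) ∪ {Y}) :=
    fun c hc => Subring.subset_closure (Or.inl hc)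
  have hYP : Y ∈ Subring.closure ((F : Set L) ∪ {Y}) := Subring.subset_closure (Or.inr rfl)
  refine ⟨hk, hFP, hYP, ?_, ?_⟩
  · intro p hp h
    obtain ⟨f, hf, rfl⟩ := closure_poly F Y hp
    refine hT (X * f - 1) ?_ ?_ (by simp [h])
    · rw [sub_eq_add_neg]
      exact PIn.add (W := F.toSubring) (PIn.X.mul hf) (Prim.one F.toSubring).1.neg
    · intro h0
      have := congrArg (fun q => q.coeff 0) h0
      simp at this
  · have aux : ∀ (N : ℕ) (f : L[X]), f.natDegree ≤ N → PIn (F.toSubring : Set L) f → f ≠ 0 →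
        ∃ (j : ℕ) (c h : L), c ∈ F ∧ c ≠ 0 ∧ h ∈ Subring.closure ((F : Set L) ∪ {Y}) ∧
          f.eval Y = Y ^ j * (c + Y * h) := by
      intro N
      induction N with
      | zero =>
        intro f hN hf h0
        rw [eq_C_of_natDegree_le_zero hN] at h0 ⊢
        exact ⟨0, f.coeff 0, 0, hf 0, fun h => h0 (by rw [h, C_0]), Subring.zero_mem _, by simp⟩
      | succ N ih =>
        intro f hN hf h0
        have hdiv : PIn (F.toSubring : Set L) f.divX := fun i => by rw [coeff_divX]; exact hf _
        have e := congrArg (eval Y) (divX_mul_X_add f)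
        simp only [eval_add, eval_mul, eval_X, eval_C] at e
        by_cases hc : f.coeff 0 = 0
        · obtain ⟨j, c, h, hcF, hc0, hh, e2⟩ := ih f.divX (by
            rw [natDegree_divX_eq_natDegree_tsub_one]; omega) hdiv (fun h => h0 (by
              rw [← divX_mul_X_add f, h, hc]; simp))
          refine ⟨j + 1, c, h, hcF, hc0, hh, ?_⟩
          rw [← e, hc, e2]; ring
        · refine ⟨0, f.coeff 0, f.divX.eval Y, hf 0, hc, ?_, ?_⟩
          · exact PIn.eval (fun i => hFP _ (hdiv i)) hYP
          · rw [← e]; ring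
    intro g hg hg0
    obtain ⟨f, hf, rfl⟩ := closure_poly F Y hg
    exact aux _ f le_rfl hf (fun h => hg0 (by simp [h]))

/-- The maximal ideal. -/
def MG (P : Subring L) (Y : L) : Set L := {x | ∃ f ∈ P, ∃ h ∈ P, x = Y * f / (1 + Y * h)}

section polyd
variable {k F : Subfield L} {P : Subring L} {Y : L}

lemma PolyD.den (H : PolyD k F P Y) {h : L} (hh : h ∈ P) : 1 + Y * h ≠ 0 := by
  intro e
  exact H.hY (-h) (P.neg_mem hh) (by linear_combination -e)

lemma PolyD.mem_M (H : PolyD k F P Y) {x : L} :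
    (∃ v, (∃ f ∈ P, ∃ g ∈ P, (¬ ∃ h ∈ P, g = Y * h) ∧ v = f / g) ∧ x = Y * v) ↔ x ∈ MG P Y := by
  constructor
  · rintro ⟨_, ⟨f, hf, g, hg, hn, rfl⟩, rfl⟩
    have hg0 : g ≠ 0 := fun h => hn ⟨0, P.zero_mem, by simp [h]⟩
    obtain ⟨j, c, h, hc, hc0, hh, e⟩ := H.fac g hg hg0
    have hc' : c⁻¹ ∈ P := H.FP _ (F.inv_mem hc)
    have hj : j = 0 := by
      by_contra hj
      obtain ⟨i, rfl⟩ := Nat.exists_eq_succ_of_ne_zero hj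
      exact hn ⟨Y ^ i * (c + Y * h), P.mul_mem (P.pow_mem H.YP i) (P.add_mem (H.FP _ hc)
        (P.mul_mem H.YP hh)), by rw [e, pow_succ]; ring⟩
    subst hj
    refine ⟨c⁻¹ * f, P.mul_mem hc' hf, c⁻¹ * h, P.mul_mem hc' hh, ?_⟩
    have e2 : g = c * (1 + Y * (c⁻¹ * h)) := by rw [e]; field_simp
    have e3 := H.den (P.mul_mem hc' hh)
    rw [e2]
    rw [mul_div_assoc' , div_eq_div_iff (mul_ne_zero hc0 e3) e3]
    field_simp
  · rintro ⟨f, hf, h, hh, rfl⟩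
    refine ⟨f / (1 + Y * h), ⟨f, hf, 1 + Y * h, P.add_mem P.one_mem (P.mul_mem H.YP hh), ?_, rfl⟩,
      mul_div_assoc _ _ _⟩
    rintro ⟨h', hh', e⟩
    exact H.hY (h' - h) (P.sub_mem hh' hh) (by linear_combination -e)

lemma PolyD.Madd (H : PolyD k F P Y) {x y : L} (hx : x ∈ MG P Y) (hy : y ∈ MG P Y) :
    x + y ∈ MG P Y := by
  obtain ⟨f, hf, h, hh, rfl⟩ := hx
  obtain ⟨f', hf', h', hh', rfl⟩ := hy
  have e := H.den hh
  have e' := H.den hh'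
  have hY := H.YP
  refine ⟨f * (1 + Y * h') + f' * (1 + Y * h), ?_, h + h' + Y * h * h', ?_, ?_⟩
  · exact P.add_mem (P.mul_mem hf (P.add_mem P.one_mem (P.mul_mem hY hh')))
      (P.mul_mem hf' (P.add_mem P.one_mem (P.mul_mem hY hh)))
  · exact P.add_mem (P.add_mem hh hh') (P.mul_mem (P.mul_mem hY hh) hh')
  · rw [show 1 + Y * (h + h' + Y * h * h') = (1 + Y * h) * (1 + Y * h') by ring,
      div_add_div _ _ e e']
    congr 1; ring

lemma PolyD.Pmul {x y : L} (hx : x ∈ P) (hy : y ∈ MG P Y) :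
    x * y ∈ MG P Y := by
  obtain ⟨f, hf, h, hh, rfl⟩ := hy
  exact ⟨x * f, P.mul_mem hx hf, h, hh, by rw [← mul_div_assoc]; congr 1; ring⟩

lemma PolyD.MM (H : PolyD k F P Y) {x y : L} (hx : x ∈ MG P Y) (hy : y ∈ MG P Y) :
    x * y ∈ MG P Y := by
  obtain ⟨f, hf, h, hh, rfl⟩ := hx
  obtain ⟨f', hf', h', hh', rfl⟩ := hy
  have hY := H.YP
  refine ⟨Y * f * f', P.mul_mem (P.mul_mem hY hf) hf', h + h' + Y * h * h', ?_, ?_⟩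
  · exact P.add_mem (P.add_mem hh hh') (P.mul_mem (P.mul_mem hY hh) hh')
  · rw [show 1 + Y * (h + h' + Y * h * h') = (1 + Y * h) * (1 + Y * h') by ring,
      div_mul_div_comm]
    congr 1; ring

lemma PolyD.M0 : (0 : L) ∈ MG P Y := ⟨0, P.zero_mem, 0, P.zero_mem, by simp⟩

lemma PolyD.Msub (H : PolyD k F P Y) {x y : L} (hx : x ∈ MG P Y) (hy : y ∈ MG P Y) :
    x - y ∈ MG P Y := by
  have := H.Madd hx (PolyD.Pmul (P.neg_mem P.one_mem) hy)
  rw [sub_eq_add_neg]; simpa using this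

lemma PolyD.k_M (H : PolyD k F P Y) {c : L} (hc : c ∈ F) (hM : c ∈ MG P Y) : c = 0 := by
  by_contra hc0
  obtain ⟨f, hf, h, hh, e⟩ := hM
  have hc' : c⁻¹ ∈ P := H.FP _ (F.inv_mem hc)
  have e' := H.den hh
  refine H.hY (c⁻¹ * f - h) (P.sub_mem (P.mul_mem hc' hf) hh) ?_
  rw [eq_div_iff e'] at e
  field_simp
  linear_combination -e

/-- The ring `A = k + M`. -/
def AG (H : PolyD k F P Y) : Subring L where
  carrier := {x | ∃ c ∈ k, ∃ m ∈ MG P Y, x = c + m}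
  zero_mem' := ⟨0, k.zero_mem, 0, PolyD.M0, by simp⟩
  one_mem' := ⟨1, k.one_mem, 0, PolyD.M0, by simp⟩
  add_mem' := by
    rintro _ _ ⟨c, hc, m, hm, rfl⟩ ⟨c', hc', m', hm', rfl⟩
    exact ⟨c + c', k.add_mem hc hc', m + m', H.Madd hm hm', by ring⟩
  mul_mem' := by
    rintro _ _ ⟨c, hc, m, hm, rfl⟩ ⟨c', hc', m', hm', rfl⟩
    refine ⟨c * c', k.mul_mem hc hc', c * m' + c' * m + m * m', H.Madd (H.Madd ?_ ?_) ?_, by ring⟩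
    · exact PolyD.Pmul (H.FP _ (H.kF hc)) hm'
    · exact PolyD.Pmul (H.FP _ (H.kF hc')) hm
    · exact H.MM hm hm'
  neg_mem' := by
    rintro _ ⟨c, hc, m, hm, rfl⟩
    refine ⟨-c, k.neg_mem hc, -m, ?_, by ring⟩
    simpa using PolyD.Pmul (P.neg_mem P.one_mem) hm

lemma PolyD.MA (H : PolyD k F P Y) {x : L} (hx : x ∈ MG P Y) : x ∈ AG H :=
  ⟨0, k.zero_mem, x, hx, by simp⟩

lemma PolyD.kA (H : PolyD k F P Y) {x : L} (hx : x ∈ k) : x ∈ AG H :=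
  ⟨x, hx, 0, PolyD.M0, by simp⟩

lemma PolyD.Mmul (H : PolyD k F P Y) {x y : L} (hx : x ∈ AG H) (hy : y ∈ MG P Y) :
    x * y ∈ MG P Y := by
  obtain ⟨c, hc, m, hm, rfl⟩ := hx
  rw [add_mul]
  exact H.Madd (PolyD.Pmul (H.FP _ (H.kF hc)) hy) (H.MM hm hy)

lemma PolyD.Ainv (H : PolyD k F P Y) {x : L} (hx : x ∈ AG H) (hM : x ∉ MG P Y) :
    x⁻¹ ∈ AG H := by
  obtain ⟨c, hc, m, hm, rfl⟩ := hx
  have hc0 : c ≠ 0 := by rintro rfl; exact hM (by simpa using hm)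
  have hcm : c + m ≠ 0 := fun h => hM (h ▸ PolyD.M0)
  have hc' : c⁻¹ ∈ P := H.FP _ (F.inv_mem (H.kF hc))
  obtain ⟨f, hf, h, hh, rfl⟩ := hm
  have e := H.den hh
  have hf' := P.mul_mem hc' hf
  have e' := H.den (P.add_mem hh hf')
  refine ⟨c⁻¹, k.inv_mem hc, (-c⁻¹) * (Y * (c⁻¹ * f) / (1 + Y * (h + c⁻¹ * f))),
    PolyD.Pmul (P.neg_mem hc') ⟨_, hf', _, P.add_mem hh hf', rfl⟩, ?_⟩
  have e1 : c + Y * f / (1 + Y * h) = c * (1 + Y * (h + c⁻¹ * f)) / (1 + Y * h) := by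
    field_simp; ring
  rw [e1]
  generalize hu : 1 + Y * (h + c⁻¹ * f) = u at *
  have : Y * (c⁻¹ * f) = u - (1 + Y * h) := by rw [← hu]; ring
  rw [this]
  field_simp
  ring

lemma PolyD.onem (H : PolyD k F P Y) : (1 : L) ∉ MG P Y :=
  fun h => one_ne_zero (H.k_M F.one_mem h)

lemma PolyD.tM {X' T : L} (hX : X' ∈ P) (hT : T = (1 + Y * X') / Y) : T⁻¹ ∈ MG P Y :=
  ⟨1, P.one_mem, X', hX, by rw [hT, inv_div, mul_one]⟩

lemma PolyD.sq (H : PolyD k F P Y) {X' T m : L} (hX : X' ∈ P) (hT : T = (1 + Y * X') / Y)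
    (hm : m ∈ MG P Y) : m * m * T ∈ MG P Y := by
  obtain ⟨f, hf, h, hh, rfl⟩ := hm
  have hY := H.YP
  refine ⟨f * f * (1 + Y * X'), P.mul_mem (P.mul_mem hf hf) (P.add_mem P.one_mem
    (P.mul_mem hY hX)), h + h + Y * h * h,
    P.add_mem (P.add_mem hh hh) (P.mul_mem (P.mul_mem hY hh) hh), ?_⟩
  rw [show 1 + Y * (h + h + Y * h * h) = (1 + Y * h) * (1 + Y * h) by ring, hT]
  have e := H.den hh
  by_cases h0 : Y = 0
  · simp [h0]
  field_simp

lemma PolyD.big (H : PolyD k F P Y) {X' T x : L} (hX : X' ∈ P) (hT : T = (1 + Y * X') / Y)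
    (hY0 : Y ≠ 0) (hx : ∃ f ∈ P, ∃ g ∈ P, g ≠ 0 ∧ x = f / g) :
    ∃ n : ℕ, T⁻¹ ^ n * x ∈ MG P Y := by
  obtain ⟨f, hf, g, hg, hg0, rfl⟩ := hx
  obtain ⟨j, c, h, hc, hc0, hh, e⟩ := H.fac g hg hg0
  have hc' : c⁻¹ ∈ P := H.FP _ (F.inv_mem hc)
  have hT1 : T⁻¹ = Y * (1 / (1 + Y * X')) := by rw [hT]; simp [div_eq_mul_inv]
  have hd := H.den hX
  have hd2 := H.den (P.mul_mem hc' hh)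
  refine ⟨j + 1, ?_⟩
  have key : ∀ n : ℕ, ∃ h' ∈ P, (1 + Y * X') ^ n * (1 + Y * (c⁻¹ * h)) = 1 + Y * h' := by
    intro n
    induction n with
    | zero => exact ⟨_, P.mul_mem hc' hh, by simp⟩
    | succ n ih =>
      obtain ⟨h', hh', e'⟩ := ih
      refine ⟨X' + h' + Y * X' * h', P.add_mem (P.add_mem hX hh') (P.mul_mem (P.mul_mem H.YP hX) hh'), ?_⟩
      rw [pow_succ, mul_right_comm, e']; ring
  obtain ⟨h', hh', e'⟩ := key (j + 1)
  refine ⟨c⁻¹ * f, P.mul_mem hc' hf, h', hh', ?_⟩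
  rw [← e', e, hT1, show c + Y * h = c * (1 + Y * (c⁻¹ * h)) by field_simp]
  generalize 1 + Y * (c⁻¹ * h) = u at *
  generalize 1 + Y * X' = w at *
  rw [mul_pow, pow_succ Y j, one_div, inv_pow]
  field_simp

end polyd

/-- transcendence over intermediate fields -/
lemma trans_of {k : Type*} [Field k] [Algebra k L] (E : IntermediateField k L) {T : L}
    (hT : Transcendental E T) {K : Subfield L} (hK : K ≤ E.toSubfield) : Trans K T := by
  intro p hp hp0 h
  have hl : p ∈ Polynomial.lifts (algebraMap E L) := by
    rw [lifts_iff_coeff_lifts]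
    intro n
    exact ⟨⟨p.coeff n, hK (hp n)⟩, rfl⟩
  obtain ⟨q, hq⟩ := (mem_lifts p).1 hl
  apply hT
  refine ⟨q, fun h0 => hp0 (by rw [← hq, h0, Polynomial.map_zero]), ?_⟩
  rw [aeval_def, ← eval_map, hq, h]

end TowerAux


namespace TowerAux
open Polynomial
variable (k0 : Type) [Field k0] (r : ℕ)

/-- The variables in the ambient field. -/
noncomputable def tv (i : TowerVars r) : Amb k0 r :=
  algebraMap (MvPolynomial (TowerVars r) k0) (Amb k0 r) (MvPolynomial.X i)

lemma tv_algInd : AlgebraicIndependent k0 (tv k0 r) := by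
  have h := MvPolynomial.algebraicIndependent_X (TowerVars r) k0
  exact h.map' (f := IsScalarTower.toAlgHom k0 (MvPolynomial (TowerVars r) k0) (Amb k0 r))
    (IsFractionRing.injective (MvPolynomial (TowerVars r) k0) (Amb k0 r))

/-- The field generated by all variables but one. -/
noncomputable def EF (a : TowerVars r) : IntermediateField k0 (Amb k0 r) :=
  IntermediateField.adjoin k0 (tv k0 r '' {a}ᶜ)

lemma EF_trans (a : TowerVars r) : Transcendental (EF k0 r a) (tv k0 r a) := by
  unfold EF
  rw [IntermediateField.transcendental_adjoin_iff]
  exact (tv_algInd k0 r).transcendental_adjoin (by simp)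

lemma EF_mem {a b : TowerVars r} (h : b ≠ a) : tv k0 r b ∈ EF k0 r a :=
  IntermediateField.subset_adjoin _ _ ⟨b, h, rfl⟩

lemma base_mem (E : IntermediateField k0 (Amb k0 r)) {x : Amb k0 r} (hx : x ∈ baseSet k0 r) :
    x ∈ E := by
  obtain ⟨c, rfl⟩ := hx
  have : algebraMap (MvPolynomial (TowerVars r) k0) (Amb k0 r) (MvPolynomial.C c) =
      algebraMap k0 (Amb k0 r) c := by
    rw [IsScalarTower.algebraMap_apply k0 (MvPolynomial (TowerVars r) k0) (Amb k0 r)]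
    rfl
  change algebraMap (MvPolynomial (TowerVars r) k0) (Amb k0 r) (MvPolynomial.C c) ∈ E
  rw [this]
  exact E.algebraMap_mem c

lemma kfld_le {n : ℕ} {G : Subfield (Amb k0 r)} (hb : baseSet k0 r ⊆ G)
    (hX : ∀ i, 1 ≤ i → i ≤ n → ambX k0 r i ∈ G) : kfld k0 r n ≤ G := by
  refine Subfield.closure_le.2 ?_
  rintro x (hx | ⟨i, h1, h2, rfl⟩)
  · exact hb hx
  · exact hX i h1 h2

lemma Ffld_le {n : ℕ} {G : Subfield (Amb k0 r)} (hk : kfld k0 r n ≤ G)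
    (hZ : ∀ i, ambZ k0 r i ∈ G) : Ffld k0 r n ≤ G := by
  refine Subfield.closure_le.2 ?_
  rintro x (hx | ⟨i, rfl⟩)
  · exact hk hx
  · exact hZ i

lemma Kfld_le {n : ℕ} {G : Subfield (Amb k0 r)} (hk : Ffld k0 r n ≤ G)
    (hY : ambY k0 r ∈ G) : Kfld k0 r n ≤ G := by
  refine Subfield.closure_le.2 ?_
  rintro x (hx | rfl)
  · exact hk hx
  · exact hY

lemma base_kfld (n : ℕ) : baseSet k0 r ⊆ kfld k0 r n :=
  fun _ hx => Subfield.subset_closure (Or.inl hx)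

lemma X_kfld {i n : ℕ} (h1 : 1 ≤ i) (h2 : i ≤ n) : ambX k0 r i ∈ kfld k0 r n :=
  Subfield.subset_closure (Or.inr ⟨i, h1, h2, rfl⟩)

lemma kfld_Ffld (n : ℕ) : kfld k0 r n ≤ Ffld k0 r n :=
  fun _ hx => Subfield.subset_closure (Or.inl hx)

lemma Ffld_Kfld (n : ℕ) : Ffld k0 r n ≤ Kfld k0 r n :=
  fun _ hx => Subfield.subset_closure (Or.inl hx)

lemma Z_Ffld (n : ℕ) (i) : ambZ k0 r i ∈ Ffld k0 r n :=
  Subfield.subset_closure (Or.inr ⟨i, rfl⟩)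

lemma Y_Kfld (n : ℕ) : ambY k0 r ∈ Kfld k0 r n :=
  Subfield.subset_closure (Or.inr rfl)

lemma kfld_mono {m n : ℕ} (h : m ≤ n) : kfld k0 r m ≤ kfld k0 r n :=
  kfld_le k0 r (base_kfld k0 r n) fun _ h1 h2 => X_kfld k0 r h1 (h2.trans h)

lemma Ffld_mono {m n : ℕ} (h : m ≤ n) : Ffld k0 r m ≤ Ffld k0 r n :=
  Ffld_le k0 r ((kfld_mono k0 r h).trans (kfld_Ffld k0 r n)) (Z_Ffld k0 r n)

lemma Kfld_mono {m n : ℕ} (h : m ≤ n) : Kfld k0 r m ≤ Kfld k0 r n :=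
  Kfld_le k0 r ((Ffld_mono k0 r h).trans (Ffld_Kfld k0 r n)) (Y_Kfld k0 r n)

lemma polyRing_mono {m n : ℕ} (h : m ≤ n) : polyRing k0 r m ≤ polyRing k0 r n := by
  refine Subring.closure_mono ?_
  exact Set.union_subset_union_left _ (Ffld_mono k0 r h)

lemma Y_ne : ambY k0 r ≠ 0 := by
  have h := (tv_algInd k0 r).ne_zero (Sum.inr (Sum.inl ()))
  exact h

lemma Y_trans (n : ℕ) : Trans (Ffld k0 r n) (ambY k0 r) := by
  refine trans_of (EF k0 r (Sum.inr (Sum.inl ()))) (EF_trans k0 r _) ?_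
  refine Ffld_le k0 r (kfld_le k0 r (fun x hx => base_mem k0 r _ hx) ?_) ?_
  · intro i _ _
    exact EF_mem k0 r (by simp)
  · intro i
    exact EF_mem k0 r (by simp)

lemma ambX'_eq (n : ℕ) : ambX' k0 r n = (ambY k0 r)⁻¹ + ambX k0 r n := by
  have := Y_ne k0 r
  unfold ambX'
  field_simp

lemma X'_trans (n : ℕ) : Trans (Kfld k0 r n) (ambX' k0 r (n + 1)) := by
  have hY : ambY k0 r ∈ EF k0 r (Sum.inl (n + 1)) := EF_mem k0 r (by simp)
  refine trans_of (EF k0 r (Sum.inl (n + 1))) ?_ ?_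
  · intro h
    apply EF_trans k0 r (Sum.inl (n + 1))
    have h2 : IsAlgebraic (EF k0 r (Sum.inl (n + 1))) ((ambY k0 r)⁻¹) :=
      isAlgebraic_algebraMap (⟨_, (EF k0 r (Sum.inl (n + 1))).inv_mem hY⟩ :
        EF k0 r (Sum.inl (n + 1)))
    have h3 := h.sub h2
    rw [ambX'_eq, add_sub_cancel_left] at h3
    exact h3
  · refine Kfld_le k0 r (Ffld_le k0 r (kfld_le k0 r (fun x hx => base_mem k0 r _ hx) ?_) ?_) ?_
    · intro i _ h2
      exact EF_mem k0 r (by simp; omega)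
    · intro i
      exact EF_mem k0 r (by simp)
    · exact hY

lemma HP (n : ℕ) : PolyD (kfld k0 r n) (Ffld k0 r n) (polyRing k0 r n) (ambY k0 r) :=
  polyD_of_trans (kfld_Ffld k0 r n) (Y_trans k0 r n)

lemma Mset_eq (n : ℕ) : Mset k0 r n = MG (polyRing k0 r n) (ambY k0 r) := by
  ext x
  rw [← (HP k0 r n).mem_M]
  rfl

lemma Aset_eq (n : ℕ) : Aset k0 r n = (AG (HP k0 r n) : Set (Amb k0 r)) := by
  unfold Aset
  rw [Mset_eq]
  rfl

lemma krSet_eq (D : Set (Amb k0 r)) (K : Subfield (Amb k0 r)) (T : Amb k0 r) (hT : Trans K T) :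
    krSet k0 r D K T = (krRing D K hT : Set (Amb k0 r)) := by
  ext x
  unfold krSet
  simp only [Set.mem_iInter]
  constructor
  · intro h W hD hW
    exact h W ⟨hD, hW.le, hW.tot⟩
  · intro h W hW
    exact h W hW.1 ⟨hW.2.1, hW.2.2⟩

lemma poly_K (n : ℕ) : ∀ x ∈ polyRing k0 r n, x ∈ Kfld k0 r n := by
  intro x hx
  have : polyRing k0 r n ≤ (Kfld k0 r n).toSubring := by
    refine Subring.closure_le.2 ?_
    rintro x (hx | rfl)
    · exact Ffld_Kfld k0 r n hx
    · exact Y_Kfld k0 r n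
  exact this hx

lemma MG_K (n : ℕ) : ∀ x ∈ MG (polyRing k0 r n) (ambY k0 r), x ∈ Kfld k0 r n := by
  rintro _ ⟨f, hf, h, hh, rfl⟩
  have hY := Y_Kfld k0 r n
  exact (Kfld k0 r n).div_mem ((Kfld k0 r n).mul_mem hY (poly_K k0 r n f hf))
    ((Kfld k0 r n).add_mem (Kfld k0 r n).one_mem ((Kfld k0 r n).mul_mem hY (poly_K k0 r n h hh)))

lemma AG_K (n : ℕ) : ∀ x ∈ AG (HP k0 r n), x ∈ Kfld k0 r n := by
  rintro _ ⟨c, hc, m, hm, rfl⟩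
  exact (Kfld k0 r n).add_mem (Ffld_Kfld k0 r n (kfld_Ffld k0 r n hc)) (MG_K k0 r n m hm)

lemma exD : ∀ n, ∃ D : Subring (Amb k0 r), (D : Set (Amb k0 r)) = Dset k0 r (n + 1)
  | 0 => ⟨AG (HP k0 r 1), (Aset_eq k0 r 1).symm⟩
  | n + 1 => ⟨krRing (Dset k0 r (n + 1)) (Kfld k0 r (n + 1)) (X'_trans k0 r (n + 1)) ⊓
      AG (HP k0 r (n + 2)), by
        rw [Subring.coe_inf, ← Aset_eq, ← krSet_eq]
        rfl⟩

/-- `DR n` is `D_{n+1}` as a subring. -/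
noncomputable def DR (n : ℕ) : Subring (Amb k0 r) := Classical.choose (exD k0 r n)

lemma DR_coe (n : ℕ) : (DR k0 r n : Set (Amb k0 r)) = Dset k0 r (n + 1) :=
  Classical.choose_spec (exD k0 r n)

lemma DR_zero : DR k0 r 0 = AG (HP k0 r 1) := by
  apply SetLike.coe_injective
  rw [DR_coe, ← Aset_eq]
  rfl

lemma DR_succ (n : ℕ) (x : Amb k0 r) : x ∈ DR k0 r (n + 1) ↔ x ∈ AG (HP k0 r (n + 2)) ∧
    x ∈ krRing (DR k0 r n : Set (Amb k0 r)) (Kfld k0 r (n + 1)) (X'_trans k0 r (n + 1)) := by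
  rw [← SetLike.mem_coe, DR_coe, DR_coe, ← SetLike.mem_coe, ← SetLike.mem_coe, ← Aset_eq,
    ← krSet_eq, and_comm]
  rfl

lemma DR_A (n : ℕ) : ∀ x ∈ DR k0 r n, x ∈ AG (HP k0 r (n + 1)) := by
  intro x hx
  cases n with
  | zero => rwa [DR_zero] at hx
  | succ n => exact ((DR_succ k0 r n x).1 hx).1

lemma DR_K (n : ℕ) : ∀ x ∈ DR k0 r n, x ∈ Kfld k0 r (n + 1) :=
  fun x hx => AG_K k0 r _ x (DR_A k0 r n x hx)

lemma MG_mono {m n : ℕ} (h : m ≤ n) :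
    MG (polyRing k0 r m) (ambY k0 r) ⊆ MG (polyRing k0 r n) (ambY k0 r) := by
  rintro _ ⟨f, hf, g, hg, rfl⟩
  exact ⟨f, polyRing_mono k0 r h hf, g, polyRing_mono k0 r h hg, rfl⟩

lemma AG_mono {m n : ℕ} (h : m ≤ n) : AG (HP k0 r m) ≤ AG (HP k0 r n) := by
  rintro _ ⟨c, hc, x, hx, rfl⟩
  exact ⟨c, kfld_mono k0 r h hc, x, MG_mono k0 r h hx, rfl⟩

lemma AG_MG {m n : ℕ} (h : m ≤ n) {x : Amb k0 r} (hx : x ∈ AG (HP k0 r m))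
    (hM : x ∈ MG (polyRing k0 r n) (ambY k0 r)) : x ∈ MG (polyRing k0 r m) (ambY k0 r) := by
  obtain ⟨c, hc, x, hx, rfl⟩ := hx
  have h1 : c ∈ MG (polyRing k0 r n) (ambY k0 r) := by
    have := (HP k0 r n).Msub hM (MG_mono k0 r h hx)
    rwa [add_sub_cancel_right] at this
  have h2 := (HP k0 r n).k_M (kfld_Ffld k0 r n (kfld_mono k0 r h hc)) h1
  rw [h2, zero_add]; exact hx

lemma DR_le (n : ℕ) : DR k0 r n ≤ DR k0 r (n + 1) := by
  intro x hx
  exact (DR_succ k0 r n x).2 ⟨AG_mono k0 r (by omega) (DR_A k0 r n x hx), kr_D _ hx⟩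

lemma DR_mono {m n : ℕ} (h : m ≤ n) : DR k0 r m ≤ DR k0 r n :=
  monotone_nat_of_le_succ (DR_le k0 r) h

lemma X_P (n : ℕ) : ambX k0 r (n + 1) ∈ polyRing k0 r (n + 1) :=
  Subring.subset_closure (Or.inl (kfld_Ffld k0 r _ (X_kfld k0 r (by omega) le_rfl)))

lemma X_K (n : ℕ) : ambX k0 r (n + 1) ∈ Kfld k0 r (n + 1) :=
  Ffld_Kfld k0 r _ (kfld_Ffld k0 r _ (X_kfld k0 r (by omega) le_rfl))

lemma X'_K (n : ℕ) : ambX' k0 r (n + 1) ∈ Kfld k0 r (n + 1) := by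
  rw [ambX'_eq]
  exact (Kfld k0 r (n + 1)).add_mem ((Kfld k0 r (n + 1)).inv_mem (Y_Kfld k0 r _)) (X_K k0 r n)

lemma step (n : ℕ) : Step (DR k0 r n) (Kfld k0 r (n + 1)) (Kfld k0 r (n + 2)) (ambX' k0 r (n + 2))
    (AG (HP k0 r (n + 2))) (MG (polyRing k0 r (n + 2)) (ambY k0 r)) (DR k0 r (n + 1)) where
  hT := X'_trans k0 r (n + 1)
  KK := Kfld_mono k0 r (by omega)
  TK := X'_K k0 r (n + 1)
  DK := DR_K k0 r n
  fr := by
    intro x hx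
    have hle : Kfld k0 r (n + 2) ≤ fracFld (X'_trans k0 r (n + 1)) := by
      have hb := fracFld_base (X'_trans k0 r (n + 1))
      refine Kfld_le k0 r (Ffld_le k0 r (kfld_le k0 r ?_ ?_) ?_) ?_
      · intro x hx
        exact hb (Ffld_Kfld k0 r _ (kfld_Ffld k0 r _ (base_kfld k0 r _ hx)))
      · intro i h1 h2
        rcases Nat.lt_or_ge i (n + 2) with h | h
        · exact hb (Ffld_Kfld k0 r _ (kfld_Ffld k0 r _ (X_kfld k0 r h1 (by omega))))
        · obtain rfl : i = n + 2 := by omega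
          have h3 := Subfield.sub_mem _ (fracFld_T (X'_trans k0 r (n + 1)))
            (hb ((Kfld k0 r (n + 1)).inv_mem (Y_Kfld k0 r (n + 1))))
          have h4 : ambX' k0 r (n + 1 + 1) - (ambY k0 r)⁻¹ = ambX k0 r (n + 2) := by
            rw [ambX'_eq, add_sub_cancel_left]
          exact h4 ▸ h3
      · intro i
        exact hb (Ffld_Kfld k0 r _ (Z_Ffld k0 r _ i))
      · exact hb (Y_Kfld k0 r _)
    exact hle hx
  MA := fun x hx => (HP k0 r (n + 2)).MA hx
  Madd := fun x hx y hy => (HP k0 r (n + 2)).Madd hx hy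
  Mmul := fun x hx y hy => (HP k0 r (n + 2)).Mmul hx hy
  Mone := (HP k0 r (n + 2)).onem
  Ainv := fun x hx hM => (HP k0 r (n + 2)).Ainv hx hM
  big := by
    intro x hx
    have hle : Kfld k0 r (n + 2) ≤ fracFld (Y_trans k0 r (n + 2)) :=
      Kfld_le k0 r (fracFld_base _) (fracFld_T _)
    obtain ⟨f, g, hf, hg, hg0, e⟩ := hle hx
    have hP : ∀ f : (Amb k0 r)[X], PIn ((Ffld k0 r (n + 2)).toSubring : Set (Amb k0 r)) f →
        f.eval (ambY k0 r) ∈ polyRing k0 r (n + 2) := fun f hf =>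
      PIn.eval (fun i => (HP k0 r (n + 2)).FP _ (hf i)) (HP k0 r (n + 2)).YP
    exact (HP k0 r (n + 2)).big (X_P k0 r (n + 1)) rfl (Y_ne k0 r)
      ⟨_, hP f hf, _, hP g hg, Y_trans k0 r (n + 2) g hg hg0, e⟩
  sq := fun m hm => (HP k0 r (n + 2)).sq (X_P k0 r (n + 1)) rfl hm
  tM := PolyD.tM (X_P k0 r (n + 1)) rfl
  D_iff := DR_succ k0 r n

lemma dim_k {n d : ℕ} (hr : 1 ≤ r) {W : Subring (Amb k0 r)} (hW : IsVal W (Kfld k0 r n))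
    (hk : ∀ c ∈ kfld k0 r n, c ∈ W) {x : Fin d → Amb k0 r} (hx : ∀ i, x i ∈ Kfld k0 r n)
    (hc : Chain W x) : d ≤ r := by
  have h1 := Chain.algInd hW hk hx hc
  have h2 := dim_bound (K := Kfld k0 r n) (Set.range (ambZ k0 r) ∪ {ambY k0 r}) (by
    intro E hE hs
    refine Kfld_le k0 r (Ffld_le k0 r hE ?_) ?_
    · intro i; exact hs (Or.inl ⟨i, rfl⟩)
    · exact hs (Or.inr rfl)) hx h1
  have h3 : (Set.range (ambZ k0 r) ∪ {ambY k0 r}).encard ≤ (r : ℕ∞) := by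
    refine (Set.encard_union_le _ _).trans ?_
    rw [Set.encard_singleton]
    have h4 : (Set.range (ambZ k0 r)).encard ≤ ((r - 1 : ℕ) : ℕ∞) := by
      rw [← Set.image_univ]
      refine (Set.encard_image_le _ _).trans ?_
      simp
    calc _ ≤ ((r - 1 : ℕ) : ℕ∞) + 1 := by gcongr
      _ = (r : ℕ∞) := by norm_cast; omega
  exact_mod_cast h2.trans h3

lemma dim_main (hr : 1 ≤ r) (n : ℕ) : ∀ (d : ℕ) (W : Subring (Amb k0 r))
    (_ : IsVal W (Kfld k0 r (n + 1))) (_ : DR k0 r n ≤ W) (x : Fin d → Amb k0 r)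
    (_ : ∀ i, x i ∈ Kfld k0 r (n + 1)) (_ : Chain W x), d ≤ r := by
  induction n with
  | zero =>
    intro d W hW hD x hx hc
    refine dim_k k0 r hr hW (fun c hc => hD ?_) hx hc
    rw [DR_zero]; exact (HP k0 r 1).kA hc
  | succ n ih =>
    intro d W hW hD x hx hc
    by_cases hT : ambX' k0 r (n + 2) ∈ W
    · obtain ⟨h1, y, hy, hy2⟩ := (step k0 r n).descend hW hD hT hx hc
      refine ih d _ h1 ?_ y hy hy2
      exact le_inf ((DR_le k0 r n).trans hD) (DR_K k0 r n)
    · refine dim_k k0 r hr hW (fun c hc => ?_) hx hc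
      by_cases h0 : c = 0
      · rw [h0]; exact W.zero_mem
      have hcF := kfld_Ffld k0 r _ hc
      exact (step k0 r n).units_mem hW hD hT ((HP k0 r (n + 2)).kA hc)
        (fun h => h0 ((HP k0 r (n + 2)).k_M hcF h)) (Ffld_Kfld k0 r _ hcF)

end TowerAux


namespace TowerAux
open Polynomial
variable {L : Type*} [Field L]

/-- A tower of Nagata rings. -/
structure Tow (W : ℕ → Subring L) (K : ℕ → Subfield L) (T : ℕ → L) (V : Subring L)
    (KU : Subfield L) : Prop where
  val : ∀ n, IsVal (W n) (K n)
  valU : IsVal V KU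
  le : ∀ n, W n ≤ W (n + 1)
  dom : ∀ n, ∀ a ∈ W n, a⁻¹ ∈ W (n + 1) → a⁻¹ ∈ W n
  prim : ∀ n g, Prim (W n) g → g.eval (T n) ∈ W (n + 1) ∧ (g.eval (T n))⁻¹ ∈ W (n + 1)
  nag : ∀ n, (W (n + 1) : Set L) = nag (W n : Set L) (T n)
  trans : ∀ n, Trans (K n) (T n)
  union : ∀ x, x ∈ V ↔ ∃ n, x ∈ W n

/-- multivariable Nagata ring -/
def nagMv (S : Set L) (T : ℕ → L) : Set L :=
  {x | ∃ f g : MvPolynomial ℕ L,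
    (∀ m, MvPolynomial.coeff m f ∈ S) ∧ (∀ m, MvPolynomial.coeff m g ∈ S) ∧
    (∃ (t : Finset (ℕ →₀ ℕ)) (u : (ℕ →₀ ℕ) → L),
      (∀ m ∈ t, u m ∈ S) ∧ ∑ m ∈ t, u m * MvPolynomial.coeff m g = 1) ∧
    x = MvPolynomial.eval T f / MvPolynomial.eval T g}

section
variable {W : ℕ → Subring L} {K : ℕ → Subfield L} {T : ℕ → L} {V : Subring L} {KU : Subfield L}

lemma Tow.T_mem (H : Tow W K T V KU) (n : ℕ) : T n ∈ W (n + 1) := by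
  have := (H.prim n X ⟨PIn.X, 1, by simp, by simp⟩).1
  simpa using this

lemma Tow.mono (H : Tow W K T V KU) {m n : ℕ} (h : m ≤ n) : W m ≤ W n :=
  monotone_nat_of_le_succ H.le h

lemma Tow.leV (H : Tow W K T V KU) (n : ℕ) : W n ≤ V := fun x hx => (H.union x).2 ⟨n, hx⟩

lemma Tow.dom0 (H : Tow W K T V KU) (n : ℕ) : ∀ a ∈ W 0, a⁻¹ ∈ W n → a⁻¹ ∈ W 0 := by
  induction n with
  | zero => exact fun a _ h => h
  | succ n ih =>
    intro a ha h
    exact ih a ha (H.dom n a (H.mono (Nat.zero_le n) ha) h)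

lemma Tow.domV (H : Tow W K T V KU) : ∀ a ∈ W 0, a⁻¹ ∈ V → a⁻¹ ∈ W 0 := by
  intro a ha h
  obtain ⟨n, hn⟩ := (H.union _).1 h
  exact H.dom0 n a ha hn

/-- the variables in reverse order -/
def tau (T : ℕ → L) (s : ℕ) : Fin s → L := fun i => T (s - 1 - i)

lemma tau_succ (T : ℕ → L) (s : ℕ) :
    tau T (s + 1) = (Fin.cons (T s) (tau T s) : Fin (s + 1) → L) := by
  funext i
  refine Fin.cases ?_ (fun i => ?_) i
  · simp [tau]
  · simp only [tau, Fin.cons_succ, Fin.val_succ]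
    congr 1
    omega

lemma Tow.evalFin (H : Tow W K T V KU) (s : ℕ) (g : MvPolynomial (Fin s) L)
    (hg : ∀ m, MvPolynomial.coeff m g ∈ W 0) :
    MvPolynomial.eval (tau T s) g ∈ W s ∧
    ((∃ m, MvPolynomial.coeff m g ≠ 0 ∧ (MvPolynomial.coeff m g)⁻¹ ∈ W 0) →
      MvPolynomial.eval (tau T s) g ≠ 0 ∧ (MvPolynomial.eval (tau T s) g)⁻¹ ∈ W s) := by
  induction s with
  | zero =>
    have e : MvPolynomial.eval (tau T 0) g = MvPolynomial.coeff 0 g := by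
      conv_lhs => rw [MvPolynomial.eq_C_of_isEmpty g]
      simp
    rw [e]
    refine ⟨hg 0, ?_⟩
    rintro ⟨m, h0, h1⟩
    rw [Subsingleton.elim m 0] at h0 h1
    exact ⟨h0, h1⟩
  | succ s ih =>
    set p : L[X] := Polynomial.map (MvPolynomial.eval (tau T s)) (MvPolynomial.finSuccEquiv L s g)
      with hp
    have e : MvPolynomial.eval (tau T (s + 1)) g = p.eval (T s) := by
      rw [tau_succ, MvPolynomial.eval_eq_eval_mv_eval']
    have hc : ∀ i m, MvPolynomial.coeff m ((MvPolynomial.finSuccEquiv L s g).coeff i) ∈ W 0 := by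
      intro i m
      rw [MvPolynomial.finSuccEquiv_coeff_coeff]
      exact hg _
    have hP : PIn (W s : Set L) p := by
      intro i
      rw [hp, coeff_map]
      exact (ih _ (hc i)).1
    rw [e]
    refine ⟨PIn.eval (hP.mono (H.le s)) (H.T_mem s), ?_⟩
    rintro ⟨m, h0, h1⟩
    have hprim : Prim (W s) p := by
      refine ⟨hP, m 0, ?_⟩
      rw [hp, coeff_map]
      apply (ih _ (hc (m 0))).2
      refine ⟨m.tail, ?_⟩
      rw [MvPolynomial.finSuccEquiv_coeff_coeff, Finsupp.cons_tail]
      exact ⟨h0, h1⟩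
    exact ⟨hprim.eval_ne (H.val s) (H.trans s), (H.prim s p hprim).2⟩

lemma Tow.evalMv (H : Tow W K T V KU) (g : MvPolynomial ℕ L)
    (hg : ∀ m, MvPolynomial.coeff m g ∈ W 0) :
    MvPolynomial.eval T g ∈ V ∧
    ((∃ m, MvPolynomial.coeff m g ≠ 0 ∧ (MvPolynomial.coeff m g)⁻¹ ∈ W 0) →
      MvPolynomial.eval T g ≠ 0 ∧ (MvPolynomial.eval T g)⁻¹ ∈ V) := by
  obtain ⟨s, hs⟩ : ∃ s, ∀ i ∈ g.vars, i < s := by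
    refine ⟨g.vars.sup id + 1, fun i hi => Nat.lt_succ_of_le (Finset.le_sup (f := id) hi)⟩
  have finj : Function.Injective (fun i : Fin s => s - 1 - (i : ℕ)) := by
    intro i j h
    apply Fin.ext
    have := i.2
    have := j.2
    simp only at h
    omega
  obtain ⟨q, hq⟩ := MvPolynomial.exists_rename_eq_of_vars_subset_range g
    (fun i : Fin s => s - 1 - (i : ℕ)) finj (by
      intro i hi
      have := hs i hi
      exact ⟨⟨s - 1 - i, by omega⟩, by simp only; omega⟩)
  have hqc : ∀ m, MvPolynomial.coeff m q ∈ W 0 := by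
    intro m
    rw [← MvPolynomial.coeff_rename_mapDomain _ finj, hq]
    exact hg _
  have e : MvPolynomial.eval T g = MvPolynomial.eval (tau T s) q := by
    rw [← hq, MvPolynomial.eval_rename]; rfl
  obtain ⟨h1, h2⟩ := H.evalFin s q hqc
  rw [e]
  refine ⟨H.leV s h1, ?_⟩
  rintro ⟨m, h3, h4⟩
  rw [← hq] at h3 h4
  obtain ⟨u, rfl, h5⟩ := MvPolynomial.coeff_rename_ne_zero _ _ _ h3
  rw [MvPolynomial.coeff_rename_mapDomain _ finj] at h3 h4
  obtain ⟨h6, h7⟩ := h2 ⟨u, h3, h4⟩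
  exact ⟨h6, H.leV s h7⟩

/-- polynomial expressions over `W 0` -/
noncomputable def RR (W : ℕ → Subring L) (T : ℕ → L) : Subring L :=
  (MvPolynomial.eval₂Hom (W 0).subtype T).range

lemma RR_iff {x : L} : x ∈ RR W T ↔ ∃ f : MvPolynomial ℕ L,
    (∀ m, MvPolynomial.coeff m f ∈ W 0) ∧ x = MvPolynomial.eval T f := by
  constructor
  · rintro ⟨f, rfl⟩
    refine ⟨MvPolynomial.map (W 0).subtype f, fun m => ?_, ?_⟩
    · rw [MvPolynomial.coeff_map]; exact (MvPolynomial.coeff m f).2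
    · rw [MvPolynomial.eval_map]; rfl
  · rintro ⟨f, hf, rfl⟩
    rw [MvPolynomial.eval_eq]
    refine Subring.sum_mem _ fun m _ => Subring.mul_mem _ ?_ (Subring.prod_mem _ fun i _ =>
      Subring.pow_mem _ ?_ _)
    · exact ⟨MvPolynomial.C ⟨_, hf m⟩, by simp⟩
    · exact ⟨MvPolynomial.X i, by simp⟩

/-- fractions with denominators invertible in `V` -/
def NN (R V : Subring L) : Subring L where
  carrier := {x | ∃ a ∈ R, ∃ b ∈ R, b ≠ 0 ∧ b⁻¹ ∈ V ∧ x = a / b}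
  zero_mem' := ⟨0, R.zero_mem, 1, R.one_mem, one_ne_zero, by simp, by simp⟩
  one_mem' := ⟨1, R.one_mem, 1, R.one_mem, one_ne_zero, by simp, by simp⟩
  add_mem' := by
    rintro _ _ ⟨a, ha, b, hb, hb0, hbV, rfl⟩ ⟨a', ha', b', hb', hb0', hbV', rfl⟩
    exact ⟨a * b' + b * a', R.add_mem (R.mul_mem ha hb') (R.mul_mem hb ha'), b * b',
      R.mul_mem hb hb', mul_ne_zero hb0 hb0', by rw [mul_inv]; exact V.mul_mem hbV hbV',
      div_add_div _ _ hb0 hb0'⟩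
  mul_mem' := by
    rintro _ _ ⟨a, ha, b, hb, hb0, hbV, rfl⟩ ⟨a', ha', b', hb', hb0', hbV', rfl⟩
    exact ⟨a * a', R.mul_mem ha ha', b * b',
      R.mul_mem hb hb', mul_ne_zero hb0 hb0', by rw [mul_inv]; exact V.mul_mem hbV hbV',
      div_mul_div_comm _ _ _ _⟩
  neg_mem' := by
    rintro _ ⟨a, ha, b, hb, hb0, hbV, rfl⟩
    exact ⟨-a, R.neg_mem ha, b, hb, hb0, hbV, (neg_div _ _).symm⟩

lemma NN_inv {R V : Subring L} {x : L} (hx : x ∈ NN R V) (hV : x⁻¹ ∈ V) : x⁻¹ ∈ NN R V := by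
  by_cases h0 : x = 0
  · rw [h0, inv_zero]; exact Subring.zero_mem _
  obtain ⟨a, ha, b, hb, hb0, hbV, rfl⟩ := hx
  have ha0 : a ≠ 0 := fun h => h0 (by rw [h, zero_div])
  refine ⟨b, hb, a, ha, ha0, ?_, inv_div _ _⟩
  have := V.mul_mem hV hbV
  have e : (a / b)⁻¹ * b⁻¹ = a⁻¹ := by field_simp
  rwa [e] at this

theorem Tow.main (H : Tow W K T V KU) : (V : Set L) = nagMv (W 0 : Set L) T := by
  ext x
  constructor
  · intro hx
    have hN : ∀ n, W n ≤ NN (RR W T) V := by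
      intro n
      induction n with
      | zero =>
        intro x hx
        exact ⟨x, ⟨MvPolynomial.C ⟨x, hx⟩, by simp⟩, 1, Subring.one_mem _, one_ne_zero, by simp,
          by simp⟩
      | succ n ih =>
        intro x hx
        have hx' : x ∈ TowerAux.nag (W n : Set L) (T n) := by rw [← H.nag n]; exact hx
        obtain ⟨f, g, hf, hg, rfl⟩ := (mem_nag_iff (H.val n)).1 hx'
        have hTn : T n ∈ NN (RR W T) V :=
          ⟨T n, ⟨MvPolynomial.X n, by simp⟩, 1, Subring.one_mem _, one_ne_zero, by simp, by simp⟩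
        rw [div_eq_mul_inv]
        exact Subring.mul_mem _ (PIn.eval (hf.mono ih) hTn)
          (NN_inv (PIn.eval (hg.1.mono ih) hTn) (H.leV _ (H.prim n g hg).2))
    obtain ⟨n, hn⟩ := (H.union x).1 hx
    obtain ⟨a, ha, b, hb, hb0, hbV, rfl⟩ := hN n hn
    obtain ⟨f, hf, rfl⟩ := RR_iff.1 ha
    obtain ⟨g, hg, rfl⟩ := RR_iff.1 hb
    refine ⟨f, g, hf, hg, ?_, rfl⟩
    by_cases hu : ∃ m, MvPolynomial.coeff m g ≠ 0 ∧ (MvPolynomial.coeff m g)⁻¹ ∈ W 0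
    · obtain ⟨m, h0, h1⟩ := hu
      exact ⟨{m}, fun _ => (MvPolynomial.coeff m g)⁻¹, by simpa using h1, by simp [h0]⟩
    · exfalso
      push Not at hu
      refine not_NU hb0 hbV ?_
      rw [MvPolynomial.eval_eq]
      refine NU.sum H.valU _ _ fun m _ => ?_
      rw [mul_comm]
      refine NU.mul (Subring.prod_mem _ fun i _ => Subring.pow_mem _ (H.leV _ (H.T_mem i)) _)
        ⟨H.leV 0 (hg m), ?_⟩
      by_cases h0 : MvPolynomial.coeff m g = 0
      · exact Or.inl h0
      · exact Or.inr fun h => hu m h0 (H.domV _ (hg m) h)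
  · rintro ⟨f, g, hf, hg, ⟨t, u, hu, hs⟩, rfl⟩
    have hex : ∃ m, MvPolynomial.coeff m g ≠ 0 ∧ (MvPolynomial.coeff m g)⁻¹ ∈ W 0 := by
      by_contra hne
      push Not at hne
      apply NU.not_one (W 0)
      rw [← hs]
      refine NU.sum (H.val 0) _ _ fun i hi => NU.mul (hu i hi) ⟨hg i, ?_⟩
      by_cases h0 : MvPolynomial.coeff i g = 0
      · exact Or.inl h0
      · exact Or.inr (hne i h0)
    rw [div_eq_mul_inv]
    exact V.mul_mem (H.evalMv f hf).1 ((H.evalMv g hg).2 hex).2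

end

/-- Krull dimension bound from chains of elements. -/
lemma krull_le (V : Subring L) (N : ℕ) (h : ∀ (d : ℕ) (x : Fin d → L), (∀ i, x i ∈ V) →
    Chain V x → d ≤ N) : ringKrullDim V ≤ (N : WithBot ℕ∞) := by
  unfold ringKrullDim Order.krullDim
  refine iSup_le fun p => ?_
  have key : p.length ≤ N := by
    have hex : ∀ i : Fin p.length, ∃ x : V, x ∈ (p i.succ).asIdeal ∧ x ∉ (p i.castSucc).asIdeal := by
      intro i
      have hlt : p i.castSucc < p i.succ := p.step i
      exact Set.exists_of_ssubset (SetLike.coe_ssubset_coe.2 hlt)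
    choose x hx1 hx2 using hex
    refine h p.length (fun i => (x i : L)) (fun i => (x i).2) (fun i => ⟨?_, fun e he => ?_⟩)
    · intro h0
      have : x i = 0 := Subtype.ext h0
      exact hx2 i (this ▸ Ideal.zero_mem _)
    · have hx0 : (x i : L) ≠ 0 := by
        intro h0
        have : x i = 0 := Subtype.ext h0
        exact hx2 i (this ▸ Ideal.zero_mem _)
      have e1 : ∏ j ∈ Finset.Ioi i, x j ^ e j = ⟨_, he⟩ * x i := by
        apply Subtype.ext
        push_cast
        rw [div_mul_cancel₀ _ hx0]
      have h2 : ∏ j ∈ Finset.Ioi i, x j ^ e j ∈ (p i.succ).asIdeal := by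
        rw [e1]; exact Ideal.mul_mem_left _ _ (hx1 i)
      obtain ⟨j, hj, hj2⟩ := (Ideal.IsPrime.prod_mem_iff (hp := (p i.succ).isPrime)).1 h2
      have h3 := (p i.succ).isPrime.mem_of_pow_mem _ hj2
      apply hx2 j
      have hle : p i.succ ≤ p j.castSucc := p.monotone (by
        rw [Fin.le_def]; simpa using (Finset.mem_Ioi.1 hj))
      exact hle h3
  exact_mod_cast key

end TowerAux


namespace TowerAux
open Polynomial
variable (k0 : Type) [Field k0] (r : ℕ)

lemma KfldU_iff (x : Amb k0 r) : x ∈ KfldU k0 r ↔ ∃ n, x ∈ Kfld k0 r n := by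
  constructor
  · intro hx
    have hd : Directed (· ≤ ·) (fun n => Kfld k0 r n) :=
      directed_of_isDirected_le (fun m n h => Kfld_mono k0 r h)
    rw [← Subfield.mem_iSup_of_directed hd]
    have h : KfldU k0 r ≤ ⨆ n, Kfld k0 r n := by
      refine Subfield.closure_le.2 ?_
      have hF : FfldU k0 r ≤ ⨆ n, Kfld k0 r n := by
        refine Subfield.closure_le.2 ?_
        rintro y (hy | ⟨i, rfl⟩)
        · obtain ⟨n, hn⟩ := Set.mem_iUnion.1 hy
          exact le_iSup (fun n => Kfld k0 r n) n (Ffld_Kfld k0 r n (kfld_Ffld k0 r n hn))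
        · exact le_iSup (fun n => Kfld k0 r n) 0 (Ffld_Kfld k0 r 0 (Z_Ffld k0 r 0 i))
      rintro y (hy | rfl)
      · exact hF hy
      · exact le_iSup (fun n => Kfld k0 r n) 0 (Y_Kfld k0 r 0)
    exact h hx
  · rintro ⟨n, hn⟩
    have h1 : FfldU k0 r ≤ KfldU k0 r := fun y hy => Subfield.subset_closure (Or.inl hy)
    refine Kfld_le k0 r (Ffld_le k0 r ?_ ?_) ?_ hn
    · intro y hy
      exact h1 (Subfield.subset_closure (Or.inl (Set.mem_iUnion.2 ⟨n, hy⟩)))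
    · intro i
      exact h1 (Subfield.subset_closure (Or.inr ⟨i, rfl⟩))
    · exact Subfield.subset_closure (Or.inr rfl)

lemma DsetU_iff (x : Amb k0 r) : x ∈ DsetU k0 r ↔ ∃ n, x ∈ DR k0 r n := by
  unfold DsetU
  rw [Set.mem_iUnion]
  constructor
  · rintro ⟨n, hn⟩
    cases n with
    | zero => exact ⟨0, by rw [← SetLike.mem_coe, DR_coe]; exact hn⟩
    | succ n => exact ⟨n, by rw [← SetLike.mem_coe, DR_coe]; exact hn⟩
  · rintro ⟨n, hn⟩
    exact ⟨n + 1, by rw [← DR_coe]; exact hn⟩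

section fin
variable {k0 r} {D' : Subring (Amb k0 r)} {Q : Set (Amb k0 r)}

lemma DR_leU (hD : (D' : Set (Amb k0 r)) = DsetU k0 r) (n : ℕ) : DR k0 r n ≤ D' := by
  intro x hx
  rw [← SetLike.mem_coe, hD]
  exact (DsetU_iff k0 r x).2 ⟨n, hx⟩

lemma PrimeIn.res (hQ : PrimeIn D' Q) {E : Subring (Amb k0 r)} (h : E ≤ D') :
    PrimeIn E (Q ∩ (E : Set (Amb k0 r))) where
  le := fun _ hx => hx.2
  zero := ⟨hQ.zero, E.zero_mem⟩
  add := fun x hx y hy => ⟨hQ.add x hx.1 y hy.1, E.add_mem hx.2 hy.2⟩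
  mul := fun x hx y hy => ⟨hQ.mul x (h hx) y hy.1, E.mul_mem hx hy.2⟩
  one := fun h1 => hQ.one h1.1
  prime := fun x hx y hy hxy => (hQ.prime x (h hx) y (h hy) hxy.1).imp (⟨·, hx⟩) (⟨·, hy⟩)

lemma inv_notMem (hD : (D' : Set (Amb k0 r)) = DsetU k0 r) (hQ : PrimeIn D' Q) {m : ℕ}
    (hm : Q ∩ Dset k0 r (m + 2) ≠ MMset k0 r (m + 2)) {n : ℕ} (hn : m ≤ n) :
    (ambX' k0 r (n + 2))⁻¹ ∉ Q ∩ (DR k0 r (n + 1) : Set (Amb k0 r)) := by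
  intro ht
  apply hm
  have h1 := (step k0 r n).prime_eq (hQ.res (DR_leU hD (n + 1))) ht
  unfold MMset
  rw [Mset_eq, ← DR_coe]
  have hle : DR k0 r (m + 1) ≤ DR k0 r (n + 1) := DR_mono k0 r (by omega)
  ext x
  constructor
  · rintro ⟨hx, hx2⟩
    have : x ∈ Q ∩ (DR k0 r (n + 1) : Set (Amb k0 r)) := ⟨hx, hle hx2⟩
    rw [h1] at this
    exact ⟨AG_MG k0 r (by omega) (DR_A k0 r _ x hx2) this.1, hx2⟩
  · rintro ⟨hx, hx2⟩
    have : x ∈ MG (polyRing k0 r (n + 2)) (ambY k0 r) ∩ (DR k0 r (n + 1) : Set (Amb k0 r)) :=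
      ⟨MG_mono k0 r (by omega) hx, hle hx2⟩
    rw [← h1] at this
    exact ⟨this.1, hx2⟩

lemma tow (hD : (D' : Set (Amb k0 r)) = DsetU k0 r) (hQ : PrimeIn D' Q) {m : ℕ}
    (hm : Q ∩ Dset k0 r (m + 2) ≠ MMset k0 r (m + 2)) :
    Tow (fun j => locRing (hQ.res (DR_leU hD (m + 1 + j)))) (fun j => Kfld k0 r (m + 1 + j + 1))
      (fun j => ambX' k0 r (m + 1 + j + 2)) (locRing hQ) (KfldU k0 r) := by
  have hval : ∀ n, m ≤ n → IsVal (locRing (hQ.res (DR_leU hD (n + 1)))) (Kfld k0 r (n + 2)) :=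
    fun n hn => (step k0 r n).isVal_loc _ (inv_notMem hD hQ hm hn)
  have hval' : ∀ j, IsVal (locRing (hQ.res (DR_leU hD (m + 1 + j)))) (Kfld k0 r (m + 1 + j + 1)) := by
    intro j
    have := hval (m + j) (by omega)
    have e : m + 1 + j = m + j + 1 := by omega
    simp only [e]
    exact this
  have hst := fun j => (step k0 r (m + 1 + j)).loc_step (hQ.res (DR_leU hD (m + 1 + j + 1)))
    (hQ.res (DR_leU hD (m + 1 + j))) (DR_le k0 r _)
    (fun x hx => ⟨fun h => ⟨h.1, DR_le k0 r _ hx⟩, fun h => ⟨h.1, hx⟩⟩) (hval' j)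
    (inv_notMem hD hQ hm (by omega))
  have hU : ∀ x, x ∈ locRing hQ ↔ ∃ j, x ∈ locRing (hQ.res (DR_leU hD (m + 1 + j))) := by
    intro x
    constructor
    · rintro ⟨a, ha, b, hb, hbQ, rfl⟩
      rw [hD] at ha hb
      obtain ⟨i, hi⟩ := (DsetU_iff k0 r a).1 ha
      obtain ⟨j, hj⟩ := (DsetU_iff k0 r b).1 hb
      exact ⟨i + j, a, DR_mono k0 r (by omega) hi, b, DR_mono k0 r (by omega) hj,
        fun h => hbQ h.1, rfl⟩
    · rintro ⟨j, a, ha, b, hb, hbQ, rfl⟩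
      exact ⟨a, DR_leU hD _ ha, b, DR_leU hD _ hb, fun h => hbQ ⟨h, hb⟩, rfl⟩
  refine ⟨hval', ⟨?_, ?_⟩, fun j => (hst j).1, fun j => (hst j).2.1, fun j => (hst j).2.2.1,
    fun j => (hst j).2.2.2, fun j => X'_trans k0 r _, hU⟩
  · intro x hx
    obtain ⟨j, hj⟩ := (hU x).1 hx
    exact (KfldU_iff k0 r x).2 ⟨_, (hval' j).le x hj⟩
  · intro x hx
    obtain ⟨n, hn⟩ := (KfldU_iff k0 r x).1 hx
    have := (hval' n).tot x (Kfld_mono k0 r (by omega) hn)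
    exact this.imp (fun h => (hU _).2 ⟨n, h⟩) (fun h => (hU _).2 ⟨n, h⟩)

lemma dimU (hr : 2 ≤ r) (hD : (D' : Set (Amb k0 r)) = DsetU k0 r) (hQ : PrimeIn D' Q)
    (hV : IsVal (locRing hQ) (KfldU k0 r)) : ringKrullDim (locRing hQ) ≤ (r : WithBot ℕ∞) := by
  refine krull_le _ r ?_
  intro d x hx hc
  choose n hn using fun i => (KfldU_iff k0 r _).1 (hV.le _ (hx i))
  set N := Finset.univ.sup n with hN
  have hxN : ∀ i, x i ∈ Kfld k0 r (N + 1) := fun i =>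
    Kfld_mono k0 r ((Finset.le_sup (f := n) (Finset.mem_univ i)).trans (Nat.le_succ _)) (hn i)
  refine dim_main k0 r (by omega) N d (locRing hQ ⊓ (Kfld k0 r (N + 1)).toSubring) ⟨?_, ?_⟩ ?_ x hxN ?_
  · exact fun y hy => hy.2
  · intro y hy
    rcases hV.tot y ((KfldU_iff k0 r y).2 ⟨_, hy⟩) with h | h
    · exact Or.inl ⟨h, hy⟩
    · exact Or.inr ⟨h, (Kfld k0 r (N + 1)).inv_mem hy⟩
  · exact fun y hy => ⟨le_locRing hQ (DR_leU hD N hy), DR_K k0 r N y hy⟩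
  · exact fun i => ⟨(hc i).1, fun e h => (hc i).2 e h.1⟩

lemma exists_m (hD : (D' : Set (Amb k0 r)) = DsetU k0 r) (hQ : PrimeIn D' Q)
    (h : Q ≠ MMsetU k0 r) : ∃ m, Q ∩ Dset k0 r (m + 2) ≠ MMset k0 r (m + 2) := by
  by_contra! hm
  apply h
  ext x
  constructor
  · intro hx
    have hx2 := hQ.le x hx
    rw [← SetLike.mem_coe, hD, DsetU_iff] at hx2
    obtain ⟨n, hn⟩ := hx2
    refine Set.mem_iUnion.2 ⟨n, ?_⟩
    rw [← hm, ← DR_coe]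
    exact ⟨hx, DR_le k0 r n hn⟩
  · intro hx
    obtain ⟨n, hn⟩ := Set.mem_iUnion.1 hx
    rw [← hm] at hn
    exact hn.1

lemma primeIn_of_ideal (q : Ideal D') (hq : q.IsPrime) :
    PrimeIn D' (Subtype.val '' (q : Set D')) where
  le := by rintro _ ⟨x, _, rfl⟩; exact x.2
  zero := ⟨0, q.zero_mem, rfl⟩
  add := by
    rintro _ ⟨x, hx, rfl⟩ _ ⟨y, hy, rfl⟩
    exact ⟨x + y, q.add_mem hx hy, rfl⟩
  mul := by
    rintro x hx _ ⟨y, hy, rfl⟩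
    exact ⟨⟨x, hx⟩ * y, q.mul_mem_left _ hy, rfl⟩
  one := by
    rintro ⟨x, hx, h⟩
    have : x = 1 := Subtype.ext h
    exact hq.ne_top ((Ideal.eq_top_iff_one q).2 (this ▸ hx))
  prime := by
    rintro x hx y hy ⟨z, hz, h⟩
    have e : z = ⟨x, hx⟩ * ⟨y, hy⟩ := Subtype.ext h
    rw [e] at hz
    exact (hq.mem_or_mem hz).imp (fun h => ⟨_, h, rfl⟩) (fun h => ⟨_, h, rfl⟩)

end fin
end TowerAux

/-- In the tower construction with `D := ⋃_{n ≥ 1} Dₙ` and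
`𝓜 := ⋃_{n ≥ 2} 𝓜ₙ`: for every prime `q` of `D` with `q ≠ 𝓜`, the localization
`D_q` is a valuation domain (of the quotient field `K` of `D`) of Krull dimension
`≤ r`; more precisely, for any `m ≥ 2` with `q ∩ D_m ≠ 𝓜_m`, one has
`D_q = (D_m)_{q_m}(X′_{m+1}, X′_{m+2}, …)`, the Nagata ring of `(D_m)_{q_m}` in the
variables `X′_{m+1}, X′_{m+2}, …`. -/
theorem tower_localizations_of_D_are_valuation
    (k0 : Type) [Field k0] (r : ℕ) (hr : 2 ≤ r) :
    ∀ D' : Subring (Amb k0 r), (D' : Set (Amb k0 r)) = DsetU k0 r →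
      ∀ q : Ideal ↥D', q.IsPrime → Subtype.val '' (q : Set ↥D') ≠ MMsetU k0 r →
        (∀ Vq : Subring (Amb k0 r),
          (Vq : Set (Amb k0 r)) =
              locAt k0 r (DsetU k0 r) (Subtype.val '' (q : Set ↥D')) →
          (∀ x ∈ KfldU k0 r, x ∈ Vq ∨ x⁻¹ ∈ Vq) ∧
          ringKrullDim ↥Vq ≤ (r : WithBot ℕ∞)) ∧
        ∀ m : ℕ, 2 ≤ m →
          Subtype.val '' (q : Set ↥D') ∩ Dset k0 r m ≠ MMset k0 r m →
          locAt k0 r (DsetU k0 r) (Subtype.val '' (q : Set ↥D')) =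
            nagataSetMv k0 r
              (locAt k0 r (Dset k0 r m) (Subtype.val '' (q : Set ↥D') ∩ Dset k0 r m))
              (fun j => ambX' k0 r (m + 1 + j)) := by
  intro D' hD q hq hne
  have hQ := TowerAux.primeIn_of_ideal q hq
  refine ⟨?_, ?_⟩
  · intro Vq hVq
    obtain ⟨m, hm⟩ := TowerAux.exists_m hD hQ hne
    have H := TowerAux.tow hD hQ hm
    have e : Vq = TowerAux.locRing hQ := by
      apply SetLike.coe_injective
      rw [hVq, ← hD]
      rfl
    subst e
    exact ⟨H.valU.tot, TowerAux.dimU hr hD hQ H.valU⟩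
  · intro m h2 hm
    obtain ⟨m, rfl⟩ : ∃ m', m = m' + 2 := ⟨m - 2, by omega⟩
    have H := (TowerAux.tow hD hQ hm).main
    have e1 : (fun j => ambX' k0 r (m + 2 + 1 + j)) = fun j => ambX' k0 r (m + 1 + j + 2) := by
      funext j
      congr 1
      omega
    have e2 : locAt k0 r (DsetU k0 r) (Subtype.val '' (q : Set ↥D')) =
        (TowerAux.locRing hQ : Set (Amb k0 r)) := by
      rw [← hD]
      rfl
    rw [e1, e2, H, ← TowerAux.DR_coe k0 r (m + 1)]
    rfl
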